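/- There exists a purely unrectifiable set P ⊆ [0,1]² such that the typical function f ∈ Lip₁([0,1]²) has points of differentiability in P, and moreover the set Diff(f) ∩ P of these points is large in the following senses: (a) Diff(f) ∩ P has non-σ-finite one-dimensional Hausdorff measure; (b) Diff(f) ∩ P projects in every direction to a set of positive Lebesgue measure, i.e. for every e ∈ S¹ the set {⟨x,e⟩ : x ∈ Diff(f) ∩ P} ⊆ ℝ has positive one-dimensional Lebesgue measure. -/

import Mathlib

/-!
The set `P` is the union of two sets `pSet O (nrm fam)`. Each of them consists of the points `x` of
the square such that `⟨x, n j⟩ ∈ O j` for all `j`, where `O j` is a dense open subset of the line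
with measure at most `2 ^ (-j)`, and `n j` alternates between two linearly independent normals (the
coordinate directions, respectively the diagonals). A curve is transversal to one of the two
normals near each of its points, so it spends no time in such a set
(`purelyUnrectifiable_pSet`).

Two properties of the typical function `f` are used, for each of the two coordinate directions:

* on countably many prescribed lines in this direction, the derivative of `f` along the line is
  `± 1` almost everywhere (`typical_deriv`);
* at arbitrarily small scales `r`, wherever the slope of `± f` at the scale `r` is nearly `1`, all
  slopes nearby are nearly `1` at all scales between `r` and `τ r`, where `τ` is any given positive
  function (`typical_straight`). The reason is that `f` is extremely close to a function which has
  been averaged over a length much larger than `r`.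

Given a direction `e`, let `v` be the coordinate direction nearest to it. One constructs compact
sets of points of `P` at which the derivative of `f` in the direction `v` is `± 1`; at such a point
the `1`-Lipschitz function `f` is Fréchet differentiable
(`differentiableAt_of_abs_slope_one`). The construction starts with a set of positive measure on a
line, on which the derivative is `1` (after replacing `f` by `-f` if necessary). In the inductive
step (`half_step`), there is a compact set `K` on which the forward slopes of `f` at small scales are
nearly `1`. Choose a small scale `r` with the second property. Each point of `K` can be moved,
along the line orthogonal to `e`, by a small multiple of `r`, into one of the strips
`{x | ⟨x, n j⟩ ∈ O j}`, and further to one of the prescribed lines. A short segment of this line,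
of length comparable to the width of the strip, covers the nearby part of the projection of `K`.
The slopes of `f` on this segment are nearly `1` at scales between its length and `r`. Since
`t - f` is monotone along the line, a covering argument (`volume_steep_le`) shows that they are also
nearly `1` at all smaller scales, except for centres in a small part of the segment, and the first
property then gives forward slopes even closer to `1` at all sufficiently small scales
(`volume_goodPts`). So the step can be repeated, with a small loss in the measure of the
projection.

In each step the lines may be taken from either of two disjoint dense sets of lines, so the
construction branches and yields a family of disjoint compact subsets of `Diff f ∩ P` indexed by
`ℕ → Bool`, each of which has a projection in the direction `e` of positive measure
(`exists_compact_family`). One of them suffices for the claim about projections. All have positive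
length, and since they are disjoint and uncountably many, the length of `Diff f ∩ P` is not
`σ`-finite (`not_sigmaFinite_of_family`).

The moves along the orthogonal line require that it be uniformly transversal to the strips, and for
each `e` at least one of the two families of normals has this property
(`exists_family_fibreDense`).
-/

open MeasureTheory Filter Metric Set Topology RealInnerProductSpace

noncomputable section

/-- The Euclidean plane. -/
abbrev E2 := EuclideanSpace ℝ (Fin 2)

/-- `IsC1Curve a b γ γ'` : `γ` restricted to the compact nondegenerate interval `[a,b]`
is a C¹ curve with (one-sided at endpoints) derivative `γ'`, which is continuous on `[a,b]`
and of unit norm there. -/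
def IsC1Curve (a b : ℝ) (γ γ' : ℝ → E2) : Prop :=
  a < b ∧ ContinuousOn γ' (Set.Icc a b) ∧
    (∀ t ∈ Set.Icc a b, HasDerivWithinAt γ (γ' t) (Set.Icc a b) t) ∧
    (∀ t ∈ Set.Icc a b, ‖γ' t‖ = 1)

/-- A Borel set `P ⊆ ℝ²` is purely unrectifiable if every C¹ curve meets it in a set of
one-dimensional Lebesgue measure zero. -/
def PurelyUnrectifiable (P : Set E2) : Prop :=
  MeasurableSet P ∧
    ∀ a b : ℝ, ∀ γ γ' : ℝ → E2, IsC1Curve a b γ γ' →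
      volume (γ ⁻¹' P ∩ Set.Icc a b) = 0

/-- The unit square `[0,1]²`. -/
def unitSquare : Set E2 := {x | ∀ i, x i ∈ Set.Icc (0:ℝ) 1}

open Classical in
/-- Extension by `0` of a function defined on the unit square. -/
def ext2 (f : unitSquare → ℝ) : E2 → ℝ :=
  fun y => if h : y ∈ unitSquare then f ⟨y, h⟩ else 0

/-- The set of points of `[0,1]²` at which `f : [0,1]² → ℝ` is (Fréchet) differentiable
within `[0,1]²`. -/
def Diff (f : unitSquare → ℝ) : Set E2 :=
  {x | ∃ _ : x ∈ unitSquare, DifferentiableWithinAt ℝ (ext2 f) unitSquare x}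

/-- The space `Lip₁([0,1]²)` of 1-Lipschitz real functions on the unit square, topologised
as a subspace of `C([0,1]², ℝ)` with the topology of uniform convergence (the supremum
metric topology, since the square is compact). -/
abbrev Lip1 := {f : C(unitSquare, ℝ) // LipschitzWith 1 ⇑f}

/-! ### Slopes of functions of one variable -/

/-- A weak-type estimate for a continuous monotone function `ψ`: the set of centres of intervals
on which `ψ` has large slope is controlled by the total increment of `ψ`. This is the Vitali
covering theorem applied to the Stieltjes measure of `ψ`. -/
lemma volume_steep_le {ψ : ℝ → ℝ} (hm : Monotone ψ) (hc : Continuous ψ) {α β R ε D : ℝ}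
    (hε : 0 < ε) (hD : ψ (β + R) - ψ (α - R) ≤ D) :
    volume {t ∈ Icc α β | ∃ s, 0 < s ∧ s ≤ R ∧ ε * s < ψ (t + s) - ψ (t - s)}
      ≤ ENNReal.ofReal (8 * D / ε) := by
  classical
  set B := {t ∈ Icc α β | ∃ s, 0 < s ∧ s ≤ R ∧ ε * s < ψ (t + s) - ψ (t - s)} with hB
  have hch : ∀ t : ℝ, ∃ s : ℝ, t ∈ B → 0 < s ∧ s ≤ R ∧ ε * s < ψ (t + s) - ψ (t - s) := by
    intro t
    by_cases ht : t ∈ B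
    · obtain ⟨s, hs⟩ := ht.2
      exact ⟨s, fun _ => hs⟩
    · exact ⟨0, fun h => absurd h ht⟩
  choose r hr using hch
  obtain ⟨u, huB, hdisj, hcov⟩ := Vitali.exists_disjoint_subfamily_covering_enlargement_closedBall
    B (fun t => t) r R (fun a ha => (hr a ha).2.1) 4 (by norm_num)
  let f : StieltjesFunction ℝ := ⟨ψ, hm, fun x => hc.continuousAt.continuousWithinAt⟩
  have hfm : ∀ a b, f.measure (Icc a b) = ENNReal.ofReal (ψ b - ψ a) := by
    intro a b
    rw [f.measure_Icc]
    congr 2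
    exact hc.continuousAt.continuousWithinAt.leftLim_eq
  have hucount : u.Countable := by
    refine hdisj.countable_of_nonempty_interior ?_
    intro a ha
    rw [Real.closedBall_eq_Icc, interior_Icc]
    have := (hr a (huB ha)).1
    exact ⟨a, by constructor <;> linarith⟩
  calc volume B ≤ volume (⋃ a ∈ u, closedBall a (4 * r a)) := by
        refine measure_mono fun t ht => ?_
        obtain ⟨b, hb, hsub⟩ := hcov t ht
        exact mem_biUnion hb (hsub (mem_closedBall_self (hr t ht).1.le))
    _ ≤ ∑' a : u, volume (closedBall (a : ℝ) (4 * r a)) := measure_biUnion_le _ hucount _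
    _ ≤ ∑' a : u, ENNReal.ofReal (8 / ε) * f.measure (closedBall (a : ℝ) (r a)) := by
        refine ENNReal.tsum_le_tsum fun a => ?_
        obtain ⟨h1, h2, h3⟩ := hr a (huB a.2)
        rw [Real.volume_closedBall, Real.closedBall_eq_Icc, hfm, ← ENNReal.ofReal_mul (by positivity)]
        refine ENNReal.ofReal_le_ofReal ?_
        rw [div_mul_eq_mul_div, le_div_iff₀ hε]
        nlinarith
    _ = ENNReal.ofReal (8 / ε) * ∑' a : u, f.measure (closedBall (a : ℝ) (r a)) :=
        ENNReal.tsum_mul_left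
    _ = ENNReal.ofReal (8 / ε) * f.measure (⋃ a ∈ u, closedBall (a : ℝ) (r a)) := by
        rw [measure_biUnion hucount hdisj fun a _ => measurableSet_closedBall]
    _ ≤ ENNReal.ofReal (8 / ε) * f.measure (Icc (α - R) (β + R)) := by
        gcongr
        refine iUnion₂_subset fun a ha => ?_
        obtain ⟨h1, h2, h3⟩ := hr a (huB ha)
        obtain ⟨h4, h5⟩ := (huB ha).1
        rw [Real.closedBall_eq_Icc]
        exact Icc_subset_Icc (by linarith) (by linarith)
    _ ≤ ENNReal.ofReal (8 * D / ε) := by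
        rw [hfm, ← ENNReal.ofReal_mul (by positivity)]
        refine ENNReal.ofReal_le_ofReal ?_
        rw [div_mul_eq_mul_div]
        gcongr

/-- The points `t` of `[α, α + r']` at which the two-sided slopes of `φ` are at least `1 - ε` at
all scales up to `r`, and the forward slopes are at least `1 - κ'` at all scales up to `ρ`. -/
def goodPts (φ : ℝ → ℝ) (α r' r ε ρ κ' : ℝ) : Set ℝ :=
  {t ∈ Icc α (α + r') | (∀ s, 0 < s → s ≤ r →
      (1 - ε) * s ≤ φ (t + s) - φ t ∧ (1 - ε) * s ≤ φ t - φ (t - s)) ∧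
    ∀ s, 0 < s → s ≤ ρ → (1 - κ') * s ≤ φ (t + s) - φ t}

lemma isClosed_goodPts {φ : ℝ → ℝ} (hφ : Continuous φ) (α r' r ε ρ κ' : ℝ) :
    IsClosed (goodPts φ α r' r ε ρ κ') := by
  unfold goodPts
  simp only [Set.ofPred_and, Set.ofPred_forall]
  refine isClosed_Icc.inter (IsClosed.inter ?_ ?_)
  · refine isClosed_iInter fun s => isClosed_iInter fun _ => isClosed_iInter fun _ => IsClosed.inter ?_ ?_
    · exact isClosed_le (by fun_prop) (by fun_prop)
    · exact isClosed_le (by fun_prop) (by fun_prop)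
  · refine isClosed_iInter fun s => isClosed_iInter fun _ => isClosed_iInter fun _ => ?_
    exact isClosed_le (by fun_prop) (by fun_prop)

lemma goodPts_anti {φ : ℝ → ℝ} {α r' r ε ρ ρ₁ κ' : ℝ} (h : ρ ≤ ρ₁) :
    goodPts φ α r' r ε ρ₁ κ' ⊆ goodPts φ α r' r ε ρ κ' :=
  fun _ ht => ⟨ht.1, ht.2.1, fun s h0 hs => ht.2.2 s h0 (hs.trans h)⟩

lemma exists_forward_of_hasDerivAt {φ : ℝ → ℝ} {t κ' : ℝ} (h : HasDerivAt φ 1 t) (hκ : 0 < κ') :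
    ∃ n : ℕ, ∀ s, 0 < s → s ≤ 1 / ((n : ℝ) + 1) → (1 - κ') * s ≤ φ (t + s) - φ t := by
  have h1 := (hasDerivAt_iff_isLittleO_nhds_zero.1 h).def hκ
  obtain ⟨δ, hδ, hball⟩ := Metric.eventually_nhds_iff.1 h1
  obtain ⟨n, hn⟩ := exists_nat_one_div_lt hδ
  refine ⟨n, fun s hs0 hs => ?_⟩
  have := hball (y := s) (by rw [Real.dist_eq, sub_zero, abs_of_pos hs0]; linarith)
  rw [Real.norm_eq_abs, Real.norm_eq_abs, abs_of_pos hs0, smul_eq_mul, mul_one] at this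
  have := (abs_le.1 this).1
  linarith

/-- If the slopes of a `1`-Lipschitz `φ` at the scales between `r'` and `r` are at least `1 - 2κ`,
and `|φ'| = 1` almost everywhere, then most points of `[α, α + r']` have slopes at least `1 - ε`
at all scales below `r`. Indeed `t - φ t` is monotone with increment `O(κ r')`, so that
`volume_steep_le` bounds the exceptional set by a multiple of `κ r' / ε`; almost everywhere
outside of it `φ' = 1`, since `φ' = ± 1` and `φ' ≥ 1 - ε`, and this gives the forward slopes at
small scales. -/
lemma volume_goodPts {φ : ℝ → ℝ} (hφ : ∀ x y, |φ x - φ y| ≤ |x - y|) {α r' r ε κ κ' q : ℝ}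
    (hr' : 0 < r') (hr : 3 * r' ≤ r) (hε0 : 0 < ε) (hε1 : ε < 1) (hκε : 2 * κ ≤ ε)
    (hκ' : 0 < κ') (hq : 48 * κ / ε < q) (hq1 : q ≤ 1)
    (hsl : ∀ t₀ t, α - r ≤ t₀ → t₀ ≤ α + r' → r' ≤ t → t ≤ r →
      (1 - 2 * κ) * t ≤ φ (t₀ + t) - φ t₀)
    (hae : ∀ᵐ t, t ∈ Icc α (α + r') → |deriv φ t| = 1) :
    ∃ ρ₀ > 0, ∀ ρ ≤ ρ₀, ENNReal.ofReal ((1 - q) * r') ≤ volume (goodPts φ α r' r ε ρ κ') := by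
  have hmono : Monotone fun t => t - φ t := by
    intro x y hxy
    have := (abs_le.1 (hφ y x)).2
    rw [abs_of_nonneg (by linarith)] at this
    show x - φ x ≤ y - φ y
    linarith
  have hcont : Continuous φ := by
    refine (LipschitzWith.of_dist_le_mul (K := 1) fun x y => ?_).continuous
    simpa [Real.dist_eq] using hφ x y
  set B := {t ∈ Icc α (α + r') | ∃ s, 0 < s ∧ s ≤ r' ∧
    ε * s < (fun t => t - φ t) (t + s) - (fun t => t - φ t) (t - s)} with hB
  have hBvol : volume B ≤ ENNReal.ofReal (8 * (6 * κ * r') / ε) := by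
    refine volume_steep_le hmono (by fun_prop) hε0 ?_
    have := hsl (α - r') (3 * r') (by linarith) (by linarith) (by linarith) hr
    rw [show α - r' + 3 * r' = α + r' + r' by ring] at this
    show α + r' + r' - φ (α + r' + r') - (α - r' - φ (α - r')) ≤ _
    linarith
  set G : ℕ → Set ℝ := fun n => goodPts φ α r' r ε (1 / ((n : ℝ) + 1)) κ' with hG
  have hGmono : Monotone G := fun a b hab => goodPts_anti (by
    have : (a : ℝ) ≤ b := by exact_mod_cast hab
    gcongr)
  -- outside the steep set `B`, small scales are controlled by the definition of `B`, large ones by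
  -- the hypothesis `hsl`
  have hsub : ∀ᵐ t, t ∈ Icc α (α + r') → t ∈ B ∪ ⋃ n, G n := by
    filter_upwards [hae] with t ht hmem
    by_cases hbt : t ∈ B
    · exact Or.inl hbt
    right
    have hsmall : ∀ s, 0 < s → s ≤ r →
        (1 - ε) * s ≤ φ (t + s) - φ t ∧ (1 - ε) * s ≤ φ t - φ (t - s) := by
      intro s hs0 hsr
      rcases le_or_gt s r' with hs | hs
      · have h1 : t + s - φ (t + s) - (t - s - φ (t - s)) ≤ ε * s := by
          by_contra hcon
          exact hbt ⟨hmem, s, hs0, hs, not_le.1 hcon⟩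
        have h2 : t - φ t ≤ t + s - φ (t + s) := hmono (by linarith : t ≤ t + s)
        have h3 : t - s - φ (t - s) ≤ t - φ t := hmono (by linarith : t - s ≤ t)
        constructor <;> linarith
      · have h1 := hsl t s (by linarith [hmem.1]) hmem.2 hs.le hsr
        have h2 := hsl (t - s) s (by linarith [hmem.1]) (by linarith [hmem.2]) hs.le hsr
        rw [sub_add_cancel] at h2
        constructor <;> nlinarith
    have hd : HasDerivAt φ (deriv φ t) t := by
      refine (differentiableAt_of_deriv_ne_zero fun h0 => ?_).hasDerivAt
      have := ht hmem
      simp [h0] at this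
    have hge : 1 - ε ≤ deriv φ t := by
      have h1 := hd.tendsto_slope_zero_right
      refine ge_of_tendsto h1 ?_
      filter_upwards [Ioc_mem_nhdsGT (show (0 : ℝ) < r by linarith)] with s hs
      have := (hsmall s hs.1 hs.2).1
      rw [smul_eq_mul, inv_mul_eq_div, le_div_iff₀ hs.1]
      exact this
    have h1 : deriv φ t = 1 := by
      rcases abs_eq (zero_le_one) |>.1 (ht hmem) with h | h
      · exact h
      · linarith
    rw [h1] at hd
    obtain ⟨n, hn⟩ := exists_forward_of_hasDerivAt hd hκ'
    exact mem_iUnion.2 ⟨n, hmem, hsmall, hn⟩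
  have hvol : ENNReal.ofReal r' ≤ volume B + ⨆ n, volume (G n) := by
    calc ENNReal.ofReal r' = volume (Icc α (α + r')) := by rw [Real.volume_Icc]; congr 1; ring
      _ ≤ volume (B ∪ ⋃ n, G n) := measure_mono_ae hsub
      _ ≤ volume B + volume (⋃ n, G n) := measure_union_le _ _
      _ = _ := by rw [hGmono.measure_iUnion]
  have hlt : ENNReal.ofReal ((1 - q) * r') < ⨆ n, volume (G n) := by
    by_contra hcon
    have h1 := hvol.trans (add_le_add hBvol (not_lt.1 hcon))
    have hκ0 : 0 ≤ 8 * (6 * κ * r') / ε ∨ 8 * (6 * κ * r') / ε < 0 := le_or_gt _ _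
    have hd : 8 * (6 * κ * r') / ε = 48 * κ / ε * r' := by ring
    rw [hd] at h1 hκ0
    have hlt' : 48 * κ / ε * r' < q * r' := by gcongr
    rcases hκ0 with h0 | h0
    · rw [← ENNReal.ofReal_add h0 (by nlinarith),
        ENNReal.ofReal_le_ofReal_iff (by nlinarith)] at h1
      nlinarith
    -- a negative `κ` would contradict the Lipschitz condition
    · have hκneg : κ < 0 := by
        by_contra hk
        have : 0 ≤ 48 * κ / ε * r' := by have := not_lt.1 hk; positivity
        linarith
      have h3 := hsl α r' (by linarith) (by linarith) le_rfl (by linarith)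
      have h4 := (abs_le.1 (hφ (α + r') α)).2
      rw [add_sub_cancel_left, abs_of_pos hr'] at h4
      nlinarith
  obtain ⟨n, hn⟩ := lt_iSup_iff.1 hlt
  exact ⟨1 / ((n : ℝ) + 1), by positivity, fun ρ hρ => hn.le.trans (measure_mono (goodPts_anti hρ))⟩

/-! ### One step of the construction -/

/-- The open unit square of `ℝ × ℝ`. -/
def oSq : Set (ℝ × ℝ) := Ioo 0 1 ×ˢ Ioo 0 1

/-- The closed unit square of `ℝ × ℝ`. -/
def cSq : Set (ℝ × ℝ) := Icc 0 1 ×ˢ Icc 0 1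

/-- The function `Φ` on the plane is `1`-Lipschitz for the `ℓ¹` distance. -/
def L1Lip (Φ : ℝ × ℝ → ℝ) : Prop := ∀ p q : ℝ × ℝ, |Φ p - Φ q| ≤ |p.1 - q.1| + |p.2 - q.2|

/-- The scale `r` straightens `Φ` in the direction of the first coordinate: wherever the slope at
scale `r` exceeds `1 - κ`, all slopes nearby at scales in `[τ, r]` exceed `1 - 2κ`. -/
def StraightAt (Φ : ℝ × ℝ → ℝ) (κ τ r : ℝ) : Prop :=
  ∀ y ∈ cSq, (y.1 + r, y.2) ∈ cSq → (1 - κ) * r ≤ Φ (y.1 + r, y.2) - Φ y →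
    ∀ z ∈ cSq, dist z y ≤ 2 * r → ∀ t, τ ≤ t → t ≤ r → (z.1 + t, z.2) ∈ cSq →
      (1 - 2 * κ) * t ≤ Φ (z.1 + t, z.2) - Φ z

lemma dist_prod_le {p q : ℝ × ℝ} {δ : ℝ} : dist p q ≤ δ ↔ |p.1 - q.1| ≤ δ ∧ |p.2 - q.2| ≤ δ := by
  rw [Prod.dist_eq, max_le_iff, Real.dist_eq, Real.dist_eq]

/-- The step of the construction on one line. Near a point `y` with forward slope at least `1 - κ`
at the straightening scale `r`, choose a horizontal line at a height `s ∈ S` on which a segment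
lies in `W` and projects under `(t, s) ↦ t + m s` onto the given interval `[a, a + r']` around the
projection of `y`. By `volume_goodPts` most of this segment consists of good points. -/
lemma line_step {Φ : ℝ × ℝ → ℝ} (hΦ : L1Lip Φ) {m : ℝ} (hm : |m| ≤ 1) {S : Set ℝ} (hS : Dense S)
    (hA : ∀ s ∈ S ∩ Ioo 0 1, ∀ᵐ t, t ∈ Ioo (0 : ℝ) 1 → |deriv (fun t => Φ (t, s)) t| = 1)
    {W : Set (ℝ × ℝ)} {ε κ κ' q r r' w b : ℝ} (hε0 : 0 < ε) (hε1 : ε < 1) (hκε : 2 * κ ≤ ε)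
    (hκ' : 0 < κ') (hq : 48 * κ / ε < q) (hq1 : q ≤ 1)
    (hr0 : 0 < r) (hw : 0 < w) (hr' : 0 < r') (hr'w : r' ≤ w / 8) (hwb : w ≤ b)
    (hb : b = ε * r / 64)
    {y : ℝ × ℝ} (hy : closedBall y (4 * r) ⊆ oSq)
    (hfw : (1 - κ) * r ≤ Φ (y.1 + r, y.2) - Φ y) (hst : StraightAt Φ κ r' r)
    (hW : ∃ σ, |σ| ≤ b ∧ ∀ x, dist x (y.1 - m * σ, y.2 + σ) < w → x ∈ W)
    {a : ℝ} (ha : a ≤ y.1 + m * y.2) (ha' : y.1 + m * y.2 ≤ a + r') :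
    ∃ s ∈ S, (∀ᶠ ρ in 𝓝[>] (0 : ℝ), ENNReal.ofReal ((1 - q) * r') ≤
        volume (goodPts (fun t => Φ (t, s)) (a - m * s) r' r ε ρ κ')) ∧
      ∀ t ∈ Icc (a - m * s) (a - m * s + r'), (t, s) ∈ W ∧ dist (t, s) y ≤ ε * r / 16 := by
  obtain ⟨σ, hσ, hσW⟩ := hW
  obtain ⟨s, hsS, hs⟩ : ∃ s ∈ S, |s - (y.2 + σ)| < w / 8 := by
    obtain ⟨s, hs, h⟩ := hS.exists_dist_lt (y.2 + σ) (show 0 < w / 8 by positivity)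
    exact ⟨s, hs, by rwa [dist_comm, Real.dist_eq] at h⟩
  have hmul : ∀ u v : ℝ, |u| ≤ v → |m * u| ≤ v := fun u v h => by
    rw [abs_mul]; nlinarith [abs_nonneg u, abs_nonneg m]
  have hεr : ε * r < r := by nlinarith
  have hs1 : |s - y.2 - σ| ≤ w / 8 := by rw [sub_sub]; exact hs.le
  have hs2 : |s - y.2| ≤ 2 * b := by
    rw [abs_le] at *; constructor <;> linarith
  have h1 := abs_le.1 (hmul _ _ hs1)
  have h2 := abs_le.1 (hmul _ _ hs2)
  have hs1' := abs_le.1 hs1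
  have hs2' := abs_le.1 hs2
  have hpt : ∀ t u, a - m * s - u ≤ t → t ≤ a - m * s + r' + u → |t - y.1| ≤ 2 * b + r' + u := by
    intro t u h h'
    rw [abs_le]; constructor <;> nlinarith
  have hbr : b ≤ r / 64 := by linarith
  have hin : ∀ t, |t - y.1| ≤ 4 * r → (t, s) ∈ oSq := fun t ht =>
    hy (mem_closedBall.2 (dist_prod_le.2 ⟨ht, by simpa using hs2.trans (by linarith)⟩))
  have hoc : oSq ⊆ cSq := prod_mono Ioo_subset_Icc_self Ioo_subset_Icc_self
  have hyc : ∀ u, 0 ≤ u → u ≤ 4 * r → (y.1 + u, y.2) ∈ cSq := fun u h0 h =>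
    hoc (hy (mem_closedBall.2 (dist_prod_le.2 ⟨by simpa [abs_of_nonneg h0] using h, by simp; positivity⟩)))
  have hsI : s ∈ Ioo (0 : ℝ) 1 := (hin y.1 (by simp; positivity)).2
  refine ⟨s, hsS, ?_, fun t ht => ⟨hσW _ ?_, dist_prod_le.2 ⟨?_, ?_⟩⟩⟩
  · have hsl : ∀ t₀ t, a - m * s - r ≤ t₀ → t₀ ≤ a - m * s + r' → r' ≤ t → t ≤ r →
        (1 - 2 * κ) * t ≤ Φ (t₀ + t, s) - Φ (t₀, s) := by
      intro t₀ t h₁ h₂ h₃ h₄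
      have e1 := hpt t₀ r (by linarith) (by linarith)
      refine hst y (by simpa using hyc 0 le_rfl (by positivity)) (hyc r hr0.le (by linarith)) hfw
        (t₀, s) (hoc (hin _ (e1.trans (by linarith)))) (dist_prod_le.2 ⟨e1.trans (by linarith),
          hs2.trans (by linarith)⟩) t h₃ h₄ (hoc (hin _ ?_))
      rw [abs_le] at *; constructor <;> linarith
    have hae : ∀ᵐ t, t ∈ Icc (a - m * s) (a - m * s + r') →
        |deriv (fun t => Φ (t, s)) t| = 1 := by
      filter_upwards [hA s ⟨hsS, hsI⟩] with t ht hti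
      exact ht (hin t ((hpt t 0 (by linarith [hti.1]) (by linarith [hti.2])).trans (by linarith))).1
    obtain ⟨ρ₀, h0, hρ⟩ := volume_goodPts (φ := fun t => Φ (t, s))
      (fun x y => by simpa using hΦ (x, s) (y, s)) hr' (by linarith) hε0 hε1 hκε hκ' hq hq1 hsl hae
    filter_upwards [Ioc_mem_nhdsGT h0] with ρ h using hρ ρ h.2
  · refine lt_of_le_of_lt (dist_prod_le (δ := w / 2).2 ⟨?_, ?_⟩) (by linarith)
    · show |t - (y.1 - m * σ)| ≤ _
      rw [abs_le]; constructor <;> nlinarith [ht.1, ht.2]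
    · show |s - (y.2 + σ)| ≤ _
      linarith
  · exact (hpt t 0 (by linarith [ht.1]) (by linarith [ht.2])).trans (by linarith)
  · exact hs2.trans (by linarith)

/-- The lower end of the range of scales to be straightened when the upper end is `r`: an eighth of
the radius (capped) of the balls contained in the open set with width function `wf` that can be
reached by moving along a fibre by at most `ε * r / 64`. It is also the length of the segments of
which the next compact set is made. -/
def tau (wf : ℝ → ℝ) (ε r : ℝ) : ℝ := min (wf (ε * r / 64)) (ε * r / 64) / 8

/-- Projection (up to scaling) in the direction `(1, m)`. -/
def lam (m : ℝ) (p : ℝ × ℝ) : ℝ := p.1 + m * p.2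

/-- Every point of the closed square can be moved along a fibre of `lam m`, by at most `b`, to the
centre of a ball of radius `wf b` contained in `W`. -/
def FibreDense (m : ℝ) (W : Set (ℝ × ℝ)) (wf : ℝ → ℝ) : Prop :=
  ∀ b > 0, 0 < wf b ∧ ∀ y ∈ cSq, ∃ σ, |σ| ≤ b ∧ ∀ x, dist x (y.1 - m * σ, y.2 + σ) < wf b → x ∈ W

lemma L1Lip.continuous {Φ : ℝ × ℝ → ℝ} (hΦ : L1Lip Φ) : Continuous Φ := by
  refine (LipschitzWith.of_dist_le_mul (K := 2) fun p q => ?_).continuous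
  have := hΦ p q
  have h := (dist_prod_le (p := p) (q := q)).1 le_rfl
  rw [Real.dist_eq]; simp only [NNReal.coe_ofNat]; linarith [h.1, h.2]

/-- One step of the construction. The compact set `K`, on which forward slopes at scales up to `ρ`
are at least `1 - κ`, is replaced by a finite union `K'` of compact subsets of segments with
heights in `S`. The new set lies in `W` and close to `K`, has two-sided slopes at least `1 - ε` at
scales up to `r` and forward slopes at least `1 - κ'` at small scales, and its projection loses at
most the proportion `q` of the measure. Splitting the line of projection into cells of length `tau
wf ε r` and applying `line_step` in each cell that meets the projection of `K` gives `K'`. -/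
lemma half_step {Φ : ℝ × ℝ → ℝ} (hΦ : L1Lip Φ) {m : ℝ} (hm : |m| ≤ 1) {S : Set ℝ} (hS : Dense S)
    (hA : ∀ s ∈ S ∩ Ioo 0 1, ∀ᵐ t, t ∈ Ioo (0 : ℝ) 1 → |deriv (fun t => Φ (t, s)) t| = 1)
    {W : Set (ℝ × ℝ)} {wf : ℝ → ℝ} (hW : FibreDense m W wf)
    {ε κ κ' q : ℝ} (hε0 : 0 < ε) (hε1 : ε < 1) (hκε : 2 * κ ≤ ε)
    (hκ' : 0 < κ') (hq : 48 * κ / ε < q) (hq1 : q ≤ 1)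
    (hC : ∀ R > 0, ∃ r, 0 < r ∧ r < R ∧ StraightAt Φ κ (tau wf ε r) r)
    {K : Set (ℝ × ℝ)} (hK : IsCompact K) (hKs : K ⊆ oSq) {ρ : ℝ} (hρ : 0 < ρ)
    (hfw : ∀ y ∈ K, ∀ u, 0 < u → u ≤ ρ → (1 - κ) * u ≤ Φ (y.1 + u, y.2) - Φ y)
    {R : ℝ} (hR : 0 < R) :
    ∃ K' : Set (ℝ × ℝ), ∃ r ρ' : ℝ, IsCompact K' ∧ 0 < r ∧ r < R ∧ 0 < ρ' ∧ (∀ x ∈ K', x.2 ∈ S) ∧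
      K' ⊆ W ∧ (∀ x ∈ K', ∃ y ∈ K, dist x y ≤ ε * r / 16) ∧
      (∀ x ∈ K', ∀ u, 0 < u → u ≤ r → (1 - ε) * u ≤ Φ (x.1 + u, x.2) - Φ x ∧
        (1 - ε) * u ≤ Φ x - Φ (x.1 - u, x.2)) ∧
      (∀ x ∈ K', ∀ u, 0 < u → u ≤ ρ' → (1 - κ') * u ≤ Φ (x.1 + u, x.2) - Φ x) ∧
      ∀ a, ENNReal.ofReal a ≤ volume (lam m '' K) →
        ENNReal.ofReal ((1 - q) * a) ≤ volume (lam m '' K') := by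
  have hoc : oSq ⊆ cSq := prod_mono Ioo_subset_Icc_self Ioo_subset_Icc_self
  obtain ⟨δ, hδ, hδK⟩ := hK.exists_cthickening_subset_open (isOpen_Ioo.prod isOpen_Ioo) hKs
  obtain ⟨r, hr0, hrR, hst⟩ := hC (min R (min ρ (δ / 4))) (by positivity)
  rw [lt_min_iff, lt_min_iff] at hrR
  set b := ε * r / 64 with hb
  have hb0 : 0 < b := by positivity
  obtain ⟨hw0, hWb⟩ := hW b hb0
  set w := min (wf b) b with hw
  have hw0' : 0 < w := lt_min hw0 hb0
  set r' := tau wf ε r with hr'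
  have hr'w : r' = w / 8 := rfl
  have hr'0 : 0 < r' := by rw [hr'w]; positivity
  -- the cells of the grid of mesh `r'` that meet the projection of `K`
  set T : Set ℤ := {k | ∃ y ∈ K, (k : ℝ) * r' ≤ lam m y ∧ lam m y < k * r' + r'} with hT
  have hlb : ∀ y ∈ K, |lam m y| ≤ 2 := by
    intro y hy
    obtain ⟨h1, h2⟩ := hKs hy
    have hm' := abs_le.1 hm
    rw [abs_le]; unfold lam
    constructor <;> nlinarith [h1.1, h1.2, h2.1, h2.2]
  have hTf : T.Finite := by
    refine (Set.finite_Icc (⌊-2 / r'⌋ - 1) ⌈2 / r'⌉).subset ?_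
    rintro k ⟨y, hy, h1, h2⟩
    have h3 := abs_le.1 (hlb y hy)
    constructor
    · have h4 : -2 / r' < k + 1 := by rw [div_lt_iff₀ hr'0]; linarith
      have : (⌊-2 / r'⌋ : ℝ) < k + 1 := (Int.floor_le _).trans_lt h4
      have : ⌊-2 / r'⌋ < k + 1 := by exact_mod_cast this
      lia
    · have h4 : (k : ℝ) ≤ 2 / r' := by rw [le_div_iff₀ hr'0]; linarith
      have : (k : ℝ) ≤ ⌈2 / r'⌉ := h4.trans (Int.le_ceil _)
      exact_mod_cast this
  have hline : ∀ k : ℤ, k ∈ T → ∃ s ∈ S, (∀ᶠ ρ in 𝓝[>] (0 : ℝ), ENNReal.ofReal ((1 - q) * r') ≤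
        volume (goodPts (fun t => Φ (t, s)) (k * r' - m * s) r' r ε ρ κ')) ∧
      ∃ y ∈ K, ∀ t ∈ Icc (k * r' - m * s) (k * r' - m * s + r'),
        (t, s) ∈ W ∧ dist (t, s) y ≤ ε * r / 16 := by
    rintro k ⟨y, hy, h1, h2⟩
    obtain ⟨σ, hσ, hσW⟩ := hWb y (hoc (hKs hy))
    obtain ⟨s, hs, h3, h4⟩ := line_step hΦ hm hS hA (W := W) hε0 hε1 hκε hκ' hq hq1 hr0 hw0' hr'0
      hr'w.le (min_le_right _ _) hb
      (((closedBall_subset_closedBall (by linarith)).trans (closedBall_subset_cthickening hy δ)).trans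
        hδK) (hfw y hy r hr0 hrR.2.1.le) hst
      ⟨σ, hσ, fun x hx => hσW x (hx.trans_le (min_le_left _ _))⟩ h1 h2.le
    exact ⟨s, hs, h3, y, hy, h4⟩
  choose! s hsS hsv y hyK hy using hline
  obtain ⟨ρ', hρ'v, hρ'0⟩ := (((hTf.eventually_all (l := 𝓝[>] (0 : ℝ))).2 hsv).and
    self_mem_nhdsWithin).exists
  set G : ℤ → Set ℝ := fun k =>
    goodPts (fun t => Φ (t, s k)) (k * r' - m * s k) r' r ε ρ' κ' with hG
  have hcont : ∀ s, Continuous fun t => Φ (t, s) := fun s => hΦ.continuous.comp (by fun_prop)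
  have hGc : ∀ k, IsCompact (G k) := fun k =>
    isCompact_Icc.of_isClosed_subset (isClosed_goodPts (hcont _) _ _ _ _ _ _) fun t ht => ht.1
  set K' : Set (ℝ × ℝ) := ⋃ k ∈ T, (fun t => (t, s k)) '' G k with hK'
  have hK'm : ∀ x ∈ K', ∃ k ∈ T, x.1 ∈ G k ∧ x.2 = s k := by
    intro x hx
    simp only [hK', mem_iUnion, mem_image] at hx
    obtain ⟨k, hk, t, ht, rfl⟩ := hx
    exact ⟨k, hk, ht, rfl⟩
  have hK'c : IsCompact K' := hTf.isCompact_biUnion fun k _ => (hGc k).image (by fun_prop)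
  refine ⟨K', r, ρ', hK'c, hr0, hrR.1, hρ'0, ?_, ?_, ?_, ?_, ?_, ?_⟩
  · intro x hx
    obtain ⟨k, hk, h1, h2⟩ := hK'm x hx
    exact h2 ▸ hsS k hk
  · intro x hx
    obtain ⟨k, hk, h1, h2⟩ := hK'm x hx
    have := (hy k hk x.1 h1.1).1
    rwa [← h2] at this
  · intro x hx
    obtain ⟨k, hk, h1, h2⟩ := hK'm x hx
    have := (hy k hk x.1 h1.1).2
    rw [← h2] at this
    exact ⟨y k, hyK k hk, this⟩
  · rintro ⟨t, s'⟩ hx u hu0 hu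
    obtain ⟨k, hk, h1, rfl⟩ := hK'm _ hx
    exact h1.2.1 u hu0 hu
  · rintro ⟨t, s'⟩ hx u hu0 hu
    obtain ⟨k, hk, h1, rfl⟩ := hK'm _ hx
    exact h1.2.2 u hu0 hu
  · intro a ha
    set I : ℤ → Set ℝ := fun k => Ico (k * r') (k * r' + r') with hI
    have hup : volume (lam m '' K) ≤ ENNReal.ofReal (hTf.toFinset.card * r') := by
      have hsub : lam m '' K ⊆ ⋃ k ∈ hTf.toFinset, I k := by
        rintro _ ⟨y, hy, rfl⟩
        have h1 := Int.floor_le (lam m y / r')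
        have h2 := Int.lt_floor_add_one (lam m y / r')
        rw [le_div_iff₀ hr'0] at h1
        rw [div_lt_iff₀ hr'0, add_mul, one_mul] at h2
        simp only [Finite.mem_toFinset, mem_iUnion]
        exact ⟨_, ⟨y, hy, h1, h2⟩, h1, h2⟩
      refine (measure_mono hsub).trans ((measure_biUnion_finset_le _ _).trans ?_)
      simp only [hI, Real.volume_Ico, add_sub_cancel_left, Finset.sum_const, nsmul_eq_mul]
      rw [ENNReal.ofReal_mul (by positivity), ENNReal.ofReal_natCast]
    have hcard : a ≤ hTf.toFinset.card * r' :=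
      (ENNReal.ofReal_le_ofReal_iff (by positivity)).1 (ha.trans hup)
    have hmeas : MeasurableSet (lam m '' K') :=
      (hK'c.image (by unfold lam; fun_prop)).isClosed.measurableSet
    have hdisj : (hTf.toFinset : Set ℤ).PairwiseDisjoint fun k => lam m '' K' ∩ I k := by
      intro k _ l _ hkl
      refine Set.disjoint_left.2 fun x hx hx' => hkl ?_
      obtain ⟨h1, h2⟩ := hx.2
      obtain ⟨h3, h4⟩ := hx'.2
      have h5 : (k : ℝ) < l + 1 := lt_of_mul_lt_mul_right (by linarith) hr'0.le
      have h6 : (l : ℝ) < k + 1 := lt_of_mul_lt_mul_right (by linarith) hr'0.le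
      have h5 : k < l + 1 := by exact_mod_cast h5
      have h6 : l < k + 1 := by exact_mod_cast h6
      lia
    have hpiece : ∀ k ∈ hTf.toFinset,
        ENNReal.ofReal ((1 - q) * r') ≤ volume (lam m '' K' ∩ I k) := by
      intro k hk
      rw [Finite.mem_toFinset] at hk
      have h1 : volume (G k \ {k * r' - m * s k + r'}) = volume (G k) :=
        measure_sdiff_null (by simp)
      refine (hρ'v k hk).trans ?_
      change volume (G k) ≤ _
      rw [← h1, ← measure_preimage_add_right volume (m * s k) (lam m '' K' ∩ I k)]
      refine measure_mono ?_
      rintro t ⟨ht, ht'⟩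
      have h2 := ht.1.1
      have h3 := lt_of_le_of_ne ht.1.2 ht'
      refine ⟨⟨(t, s k), ?_, rfl⟩, by linarith, by linarith⟩
      exact mem_biUnion hk ⟨t, ht, rfl⟩
    calc ENNReal.ofReal ((1 - q) * a)
        ≤ ENNReal.ofReal (hTf.toFinset.card * ((1 - q) * r')) :=
          ENNReal.ofReal_le_ofReal (by nlinarith [sub_nonneg.2 hq1])
      _ = ∑ k ∈ hTf.toFinset, ENNReal.ofReal ((1 - q) * r') := by
          rw [ENNReal.ofReal_mul (by positivity), ENNReal.ofReal_natCast]; simp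
      _ ≤ ∑ k ∈ hTf.toFinset, volume (lam m '' K' ∩ I k) := Finset.sum_le_sum hpiece
      _ = volume (⋃ k ∈ hTf.toFinset, lam m '' K' ∩ I k) :=
          (measure_biUnion_finset hdisj fun k _ => hmeas.inter measurableSet_Ico).symm
      _ ≤ _ := measure_mono (iUnion₂_subset fun k _ => inter_subset_left)

/-! ### The tree of compact sets -/

/-- The tolerance for two-sided slopes created at step `j`. -/
def epsS (j : ℕ) : ℝ := (1 / 2) ^ (j + 1)

/-- The tolerance for forward slopes at stage `j`. It is so small compared to `epsS j` that the
proportions lost in the projections, `48 * kapS j / epsS j`, have a sum less than `1 / 2`. -/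
def kapS (j : ℕ) : ℝ := (1 / 2) ^ (2 * j + 1) / 1000

lemma epsS_pos (j : ℕ) : 0 < epsS j := by unfold epsS; positivity
lemma kapS_pos (j : ℕ) : 0 < kapS j := by unfold kapS; positivity
lemma epsS_lt_one (j : ℕ) : epsS j < 1 := pow_lt_one₀ (by norm_num) (by norm_num) (by simp)

lemma kapS_eq (j : ℕ) : kapS j = epsS j * (1 / 2) ^ j / 1000 := by
  unfold kapS epsS; ring

lemma two_kapS_le (j : ℕ) : 2 * kapS j ≤ epsS j := by
  have h1 : ((1 : ℝ) / 2) ^ j ≤ 1 := pow_le_one₀ (by norm_num) (by norm_num)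
  rw [kapS_eq]; nlinarith [epsS_pos j]

lemma kapS_div_lt (j : ℕ) : 48 * kapS j / epsS j < (1 / 2) ^ (j + 2) := by
  have h1 : (0 : ℝ) < (1 / 2) ^ j := by positivity
  rw [div_lt_iff₀ (epsS_pos j), kapS_eq, pow_add]
  nlinarith [mul_pos (epsS_pos j) h1]

/-- The data of one node of the construction: a compact set `K`, a thickening radius `η`, the
scale `ρ` up to which forward slopes on `K` are controlled, and the scale `r` at which the node was
created. -/
structure Stg where
  K : Set (ℝ × ℝ)
  η : ℝ
  ρ : ℝ
  r : ℝ

/-- The compact neighbourhood attached to a node. -/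
def Stg.N (D : Stg) : Set (ℝ × ℝ) := cthickening D.η D.K

/-- The invariants of a node at level `j`. The lower bound `a₀ * (1 / 2 + 2 ^ (-j - 1))` for the
projection decreases from `a₀` to `a₀ / 2`. -/
structure Stg.Good (Φ : ℝ × ℝ → ℝ) (m a₀ : ℝ) (j : ℕ) (D : Stg) : Prop where
  compact : IsCompact D.K
  sub : D.N ⊆ oSq
  η_pos : 0 < D.η
  ρ_pos : 0 < D.ρ
  r_pos : 0 < D.r
  fw : ∀ y ∈ D.K, ∀ u, 0 < u → u ≤ D.ρ → (1 - kapS j) * u ≤ Φ (y.1 + u, y.2) - Φ y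
  vol : ENNReal.ofReal (a₀ * (1 / 2 + (1 / 2) ^ (j + 1))) ≤ volume (lam m '' D.K)

/-- The relation between a node `D` at level `j` and a child `D'`. -/
structure Stg.Child (Φ : ℝ × ℝ → ℝ) (W : Set (ℝ × ℝ)) (j : ℕ) (D D' : Stg) : Prop where
  sub : D'.N ⊆ D.N
  subW : D'.N ⊆ W
  r_le : D'.r ≤ (1 / 2) ^ j
  slope : ∀ x ∈ D'.K, ∀ u, 0 < u → u ≤ D'.r → (1 - epsS j) * u ≤ Φ (x.1 + u, x.2) - Φ x ∧
        (1 - epsS j) * u ≤ Φ x - Φ (x.1 - u, x.2)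
  near : ∀ x ∈ D'.N, ∃ y ∈ D.K, dist x y ≤ epsS j * D'.r / 8

/-- Each node has two disjoint children, obtained by applying `half_step` with the heights taken
from the two disjoint dense sets `S false` and `S true`. -/
lemma exists_children {Φ : ℝ × ℝ → ℝ} (hΦ : L1Lip Φ) {m a₀ : ℝ} (hm : |m| ≤ 1) (ha₀ : 0 < a₀)
    {S : Bool → Set ℝ}
    (hS : ∀ b, Dense (S b)) (hSd : Disjoint (S false) (S true))
    (hA : ∀ b, ∀ s ∈ S b ∩ Ioo 0 1, ∀ᵐ t, t ∈ Ioo (0 : ℝ) 1 → |deriv (fun t => Φ (t, s)) t| = 1)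
    {W : Set (ℝ × ℝ)} {wf : ℝ → ℝ} (hWo : IsOpen W) (hW : FibreDense m W wf) {j : ℕ}
    (hC : ∀ R > 0, ∃ r, 0 < r ∧ r < R ∧ StraightAt Φ (kapS j) (tau wf (epsS j) r) r)
    {D : Stg} (hD : D.Good Φ m a₀ j) :
    ∃ C : Bool → Stg, (∀ b, (C b).Good Φ m a₀ (j + 1)) ∧ (∀ b, D.Child Φ W j (C b)) ∧
      Disjoint (C false).N (C true).N := by
  have hDs : D.K ⊆ oSq := (self_subset_cthickening _).trans hD.sub
  have hε := epsS_pos j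
  have hε1 := epsS_lt_one j
  have key := fun b => half_step hΦ hm (hS b) (hA b) hW hε hε1 (two_kapS_le j)
    (kapS_pos (j + 1)) (kapS_div_lt j) (pow_le_one₀ (by norm_num) (by norm_num)) hC hD.compact hDs
    hD.ρ_pos hD.fw (R := min D.η ((1 / 2) ^ j)) (lt_min hD.η_pos (by positivity))
  choose K r ρ hKc hr0 hrR hρ0 hKS hKW hKn hKsl hKfw hKv using key
  have hsub : ∀ b, K b ⊆ thickening D.η D.K ∩ W := fun b x hx => by
    obtain ⟨y, hy, hxy⟩ := hKn b x hx
    refine ⟨mem_thickening_iff.2 ⟨y, hy, ?_⟩, hKW b hx⟩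
    have := (lt_min_iff.1 (hrR b)).1
    nlinarith [hr0 b]
  have hdis : Disjoint (K false) (K true) := Set.disjoint_left.2 fun x h h' =>
    Set.disjoint_left.1 hSd (hKS _ x h) (hKS _ x h')
  obtain ⟨δ, hδ, hδd⟩ := hdis.exists_cthickenings (hKc false) (hKc true).isClosed
  choose d hd hdK using fun b => (hKc b).exists_cthickening_subset_open
    (isOpen_thickening.inter hWo) (hsub b)
  set η : Bool → ℝ := fun b => min δ (min (d b) (epsS j * r b / 16)) with hη
  have hη0 : ∀ b, 0 < η b := fun b => by have := hr0 b; have := hd b; simp only [hη]; positivity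
  have hηd : ∀ b, cthickening (η b) (K b) ⊆ cthickening δ (K b) := fun b =>
    cthickening_mono (min_le_left _ _) _
  have hηN : ∀ b, cthickening (η b) (K b) ⊆ thickening D.η D.K ∩ W := fun b =>
    (cthickening_mono ((min_le_right _ _).trans (min_le_left _ _)) _).trans (hdK b)
  have hηD : ∀ b, cthickening (η b) (K b) ⊆ D.N := fun b x hx =>
    thickening_subset_cthickening _ _ (hηN b hx).1
  refine ⟨fun b => ⟨K b, η b, ρ b, r b⟩, fun b => ?_, fun b => ?_, ?_⟩
  · refine ⟨hKc b, (hηD b).trans hD.sub, hη0 b, hρ0 b, hr0 b, hKfw b, ?_⟩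
    refine le_trans (ENNReal.ofReal_le_ofReal ?_) (hKv b _ hD.vol)
    have h1 : (0 : ℝ) < (1 / 2) ^ j := by positivity
    have h2 : ((1 : ℝ) / 2) ^ j ≤ 1 := pow_le_one₀ (by norm_num) (by norm_num)
    rw [mul_left_comm]
    refine mul_le_mul_of_nonneg_left ?_ ha₀.le
    simp only [pow_add]
    nlinarith
  · refine ⟨hηD b, fun x hx => (hηN b hx).2, (lt_min_iff.1 (hrR b)).2.le, hKsl b, ?_⟩
    intro x hx
    change x ∈ cthickening (η b) (K b) at hx
    rw [(hKc b).cthickening_eq_biUnion_closedBall (hη0 b).le] at hx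
    simp only [mem_iUnion, mem_closedBall] at hx
    obtain ⟨z, hz, hxz⟩ := hx
    obtain ⟨y, hy, hzy⟩ := hKn b z hz
    refine ⟨y, hy, (dist_triangle x z y).trans ?_⟩
    have : η b ≤ epsS j * r b / 16 := (min_le_right _ _).trans (min_le_right _ _)
    show _ ≤ epsS j * r b / 8
    linarith
  · exact hδd.mono (hηd false) (hηd true)

/-- A `1`-Lipschitz function of one variable has derivative `1` at a point where the two-sided
slopes at the scales in `[R (n + 1), R n]` are at least `1 - 2 * epsS n`, for all `n`. -/
lemma hasDerivAt_one_of_slopes {φ : ℝ → ℝ} {x : ℝ} {R : ℕ → ℝ} (hR0 : ∀ n, 0 < R n)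
    (hR : ∀ n, R n ≤ (1 / 2) ^ n) (hφ : ∀ x y, |φ x - φ y| ≤ |x - y|)
    (hsl : ∀ n t, R (n + 1) ≤ t → t ≤ R n → (1 - 2 * epsS n) * t ≤ φ (x + t) - φ x ∧
      (1 - 2 * epsS n) * t ≤ φ x - φ (x - t)) : HasDerivAt φ 1 x := by
  rw [hasDerivAt_iff_isLittleO_nhds_zero, Asymptotics.isLittleO_iff]
  intro c hc
  obtain ⟨N, hN⟩ := exists_pow_lt_of_lt_one hc (show (1 / 2 : ℝ) < 1 by norm_num)
  have hall : ∀ t, 0 < t → t ≤ R N → (1 - c) * t ≤ φ (x + t) - φ x ∧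
      (1 - c) * t ≤ φ x - φ (x - t) := by
    intro t ht0 htN
    have hex : ∃ n, R (N + n + 1) ≤ t := by
      obtain ⟨n, hn⟩ := exists_pow_lt_of_lt_one ht0 (show (1 / 2 : ℝ) < 1 by norm_num)
      exact ⟨n, (hR _).trans ((pow_le_pow_of_le_one (by norm_num) (by norm_num) (by lia)).trans hn.le)⟩
    classical
    have h1 := Nat.find_spec hex
    have h2 : t ≤ R (N + Nat.find hex) := by
      rcases Nat.eq_zero_or_pos (Nat.find hex) with h | h
      · rw [h]; exact htN
      · have := Nat.find_min hex (Nat.sub_lt h one_pos)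
        have h3 : N + (Nat.find hex - 1) + 1 = N + Nat.find hex := by lia
        rw [h3] at this
        exact (not_le.1 this).le
    have h3 := hsl _ t h1 h2
    have h4 : 2 * epsS (N + Nat.find hex) ≤ c := by
      have : ((1 : ℝ) / 2) ^ (N + Nat.find hex) ≤ (1 / 2) ^ N :=
        pow_le_pow_of_le_one (by norm_num) (by norm_num) (by lia)
      unfold epsS; rw [pow_succ]; linarith
    constructor <;> nlinarith [h3.1, h3.2]
  filter_upwards [Metric.ball_mem_nhds (0 : ℝ) (hR0 N)] with h hh
  rw [mem_ball, dist_zero_right, Real.norm_eq_abs] at hh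
  rw [Real.norm_eq_abs, Real.norm_eq_abs, smul_eq_mul, mul_one]
  have hup := abs_le.1 (hφ (x + h) x)
  rcases lt_trichotomy h 0 with h0 | rfl | h0
  · rw [abs_of_neg h0] at hh ⊢
    have := (hall (-h) (by linarith) hh.le).2
    rw [sub_neg_eq_add] at this
    rw [show x + h - x = h by ring, abs_of_neg h0] at hup
    rw [abs_le]; constructor <;> nlinarith
  · simp
  · rw [abs_of_pos h0] at hh ⊢
    have := (hall h h0 hh.le).1
    rw [show x + h - x = h by ring, abs_of_pos h0] at hup
    rw [abs_le]; constructor <;> nlinarith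

/-- The node reached after `n` steps along the branch `ω`. -/
def node (C : ℕ → Stg → Bool → Stg) (D₀ : Stg) (ω : ℕ → Bool) : ℕ → Stg
  | 0 => D₀
  | n + 1 => C n (node C D₀ ω n) (ω n)

lemma node_congr (C : ℕ → Stg → Bool → Stg) (D₀ : Stg) {ω ω' : ℕ → Bool} :
    ∀ n, (∀ i < n, ω i = ω' i) → node C D₀ ω n = node C D₀ ω' n
  | 0, _ => rfl
  | n + 1, h => by
    rw [node, node, node_congr C D₀ n fun i hi => h i (by lia), h n (by lia)]

/-- The binary tree of nodes grown from `D₀` has a nested sequence of compact sets along each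
branch `ω`. Their intersections `K ω` are disjoint for distinct branches, their projections have
measure at least `a₀ / 2`, and the partial derivative of `Φ` is `1` at each of their points. -/
lemma exists_family {Φ : ℝ × ℝ → ℝ} (hΦ : L1Lip Φ) {m a₀ : ℝ} (hm : |m| ≤ 1) (ha₀ : 0 < a₀)
    {S : Bool → Set ℝ}
    (hS : ∀ b, Dense (S b)) (hSd : Disjoint (S false) (S true))
    (hA : ∀ b, ∀ s ∈ S b ∩ Ioo 0 1, ∀ᵐ t, t ∈ Ioo (0 : ℝ) 1 → |deriv (fun t => Φ (t, s)) t| = 1)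
    {W : ℕ → Set (ℝ × ℝ)} {wf : ℕ → ℝ → ℝ} (hWo : ∀ j, IsOpen (W j))
    (hW : ∀ j, FibreDense m (W j) (wf j))
    (hC : ∀ j, ∀ R > 0, ∃ r, 0 < r ∧ r < R ∧
      StraightAt Φ (kapS j) (tau (wf j) (epsS j) r) r)
    {D₀ : Stg} (hD₀ : D₀.Good Φ m a₀ 0) :
    ∃ K : (ℕ → Bool) → Set (ℝ × ℝ), Pairwise (fun ω ω' => Disjoint (K ω) (K ω')) ∧
      ∀ ω, IsCompact (K ω) ∧ K ω ⊆ oSq ∧ (∀ j, K ω ⊆ W j) ∧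
        0 < volume (lam m '' K ω) ∧ ∀ x ∈ K ω, HasDerivAt (fun t => Φ (t, x.2)) 1 x.1 := by
  have step := fun (j : ℕ) (D : Stg) (hD : D.Good Φ m a₀ j) =>
    exists_children hΦ hm ha₀ hS hSd hA (hWo j) (hW j) (hC j) hD
  choose! C hCg hCc hCd using step
  have hg : ∀ ω n, (node C D₀ ω n).Good Φ m a₀ n := by
    intro ω n
    induction n with
    | zero => exact hD₀
    | succ n ih => exact hCg n _ ih _
  have hc : ∀ ω n, (node C D₀ ω n).Child Φ (W n) n (node C D₀ ω (n + 1)) :=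
    fun ω n => hCc n _ (hg ω n) _
  have hNc : ∀ ω n, IsCompact (node C D₀ ω n).N := fun ω n => (hg ω n).compact.cthickening
  have hanti : ∀ ω, Antitone fun n => (node C D₀ ω n).N := fun ω =>
    antitone_nat_of_succ_le fun n => (hc ω n).sub
  have hlamc : Continuous (lam m) := by unfold lam; fun_prop
  refine ⟨fun ω => ⋂ n, (node C D₀ ω n).N, ?_, fun ω => ⟨?_, ?_, ?_, ?_, ?_⟩⟩
  · intro ω ω' hne
    have hex : ∃ n, ω n ≠ ω' n := Function.ne_iff.1 hne
    classical
    set n := Nat.find hex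
    have h1 : ω n ≠ ω' n := Nat.find_spec hex
    have h2 : node C D₀ ω n = node C D₀ ω' n := node_congr C D₀ n fun i hi => by
      simpa using Nat.find_min hex hi
    have h3 := hCd n _ (hg ω n)
    have h4 : Disjoint (node C D₀ ω (n + 1)).N (node C D₀ ω' (n + 1)).N := by
      rw [node, node, ← h2]
      cases hb : ω n <;> cases hb' : ω' n
      · simp [hb, hb'] at h1
      · exact h3
      · exact h3.symm
      · simp [hb, hb'] at h1
    exact h4.mono (iInter_subset _ _) (iInter_subset _ _)
  · exact (hNc ω 0).of_isClosed_subset (isClosed_iInter fun n => (hNc ω n).isClosed)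
      (iInter_subset _ _)
  · exact (iInter_subset _ 0).trans hD₀.sub
  · exact fun j => (iInter_subset _ (j + 1)).trans (hc ω j).subW
  · -- images of nested compact sets commute with intersections
    have himg : ⋂ n, lam m '' (node C D₀ ω n).N ⊆ lam m '' ⋂ n, (node C D₀ ω n).N := by
      intro z hz
      rw [mem_iInter] at hz
      obtain ⟨x, hx⟩ := IsCompact.nonempty_iInter_of_sequence_nonempty_isCompact_isClosed
        (fun n => (node C D₀ ω n).N ∩ lam m ⁻¹' {z})
        (fun n => inter_subset_inter_left _ (hc ω n).sub)
        (fun n => by obtain ⟨x, hx, rfl⟩ := hz n; exact ⟨x, hx, rfl⟩)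
        ((hNc ω 0).inter_right (isClosed_singleton.preimage hlamc))
        (fun n => (hNc ω n).isClosed.inter (isClosed_singleton.preimage hlamc))
      rw [mem_iInter] at hx
      exact ⟨x, mem_iInter.2 fun n => (hx n).1, (hx 0).2⟩
    refine lt_of_lt_of_le ?_ (measure_mono himg)
    rw [Antitone.measure_iInter (fun i j hij => image_mono (hanti ω hij))
      (fun n => ((hNc ω n).image hlamc).isClosed.measurableSet.nullMeasurableSet)
      ⟨0, ((hNc ω 0).image hlamc).measure_lt_top.ne⟩]
    refine lt_of_lt_of_le (ENNReal.ofReal_pos.2 (show 0 < a₀ / 2 by positivity)) (le_iInf fun n => ?_)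
    refine le_trans (ENNReal.ofReal_le_ofReal ?_) ((hg ω n).vol.trans
      (measure_mono (image_mono (self_subset_cthickening _))))
    have : (0 : ℝ) < (1 / 2) ^ (n + 1) := by positivity
    nlinarith
  · intro x hx
    rw [mem_iInter] at hx
    refine hasDerivAt_one_of_slopes (R := fun n => (node C D₀ ω (n + 1)).r)
      (fun n => (hg ω _).r_pos) (fun n => (hc ω n).r_le)
      (fun a b => by simpa using hΦ (a, x.2) (b, x.2)) ?_
    intro n t ht1 ht2
    have ht0 : 0 < t := lt_of_lt_of_le (hg ω _).r_pos ht1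
    -- the slope at `x` is compared with the one at a point `y` of the stage `n + 1`, whose distance
    -- to `x` is small compared to the scale `t`
    obtain ⟨y, hy, hxy⟩ := (hc ω (n + 1)).near x (hx _)
    have hsl := (hc ω n).slope y hy t ht0 ht2
    have hd := dist_prod_le.1 hxy
    have h0 := abs_le.1 (hΦ x y)
    have h1 := abs_le.1 (hΦ (x.1 + t, x.2) (y.1 + t, y.2))
    have h2 := abs_le.1 (hΦ (x.1 - t, x.2) (y.1 - t, y.2))
    simp only [add_sub_add_right_eq_sub, sub_sub_sub_cancel_right] at h1 h2
    have he : epsS (n + 1) = epsS n / 2 := by unfold epsS; ring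
    have hbd : epsS (n + 1) * (node C D₀ ω (n + 1 + 1)).r ≤ epsS n * t := by
      rw [he]
      nlinarith [mul_le_mul_of_nonneg_left ht1 (epsS_pos n).le, mul_pos (epsS_pos n) ht0]
    constructor <;> linarith [hd.1, hd.2]

/-- A line on which the derivative is `1` on a set of positive measure provides the root of the
tree. -/
lemma exists_init {Φ : ℝ × ℝ → ℝ} (hΦ : L1Lip Φ) (m : ℝ) {s : ℝ} (hs : s ∈ Ioo (0 : ℝ) 1)
    (hpos : 0 < volume {t ∈ Icc (1 / 4 : ℝ) (3 / 4) | deriv (fun t => Φ (t, s)) t = 1}) :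
    ∃ a₀ > 0, ∃ D₀ : Stg, D₀.Good Φ m a₀ 0 := by
  set G : ℕ → Set ℝ := fun n => {t ∈ Icc (1 / 4 : ℝ) (3 / 4) | ∀ u, 0 < u →
    u ≤ 1 / ((n : ℝ) + 1) → (1 - kapS 0) * u ≤ Φ (t + u, s) - Φ (t, s)} with hG
  have hcov : {t ∈ Icc (1 / 4 : ℝ) (3 / 4) | deriv (fun t => Φ (t, s)) t = 1} ⊆ ⋃ n, G n := by
    rintro t ⟨ht, hd⟩
    have h1 : HasDerivAt (fun t => Φ (t, s)) 1 t := by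
      rw [← hd]
      exact (differentiableAt_of_deriv_ne_zero (by rw [hd]; norm_num)).hasDerivAt
    obtain ⟨n, hn⟩ := exists_forward_of_hasDerivAt h1 (kapS_pos 0)
    exact mem_iUnion.2 ⟨n, ht, hn⟩
  obtain ⟨n, hn⟩ : ∃ n, 0 < volume (G n) := by
    by_contra! h
    exact hpos.ne' (measure_mono_null hcov (measure_iUnion_null fun n => le_antisymm (h n) bot_le))
  have hcont : Continuous fun t => Φ (t, s) := hΦ.continuous.comp (by fun_prop)
  have hGc : IsCompact (G n) := by
    refine isCompact_Icc.of_isClosed_subset ?_ fun t ht => ht.1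
    simp only [hG, Set.ofPred_and, Set.ofPred_forall]
    refine isClosed_Icc.inter ?_
    refine isClosed_iInter fun u => isClosed_iInter fun _ => isClosed_iInter fun _ => ?_
    exact isClosed_le (by fun_prop)
      ((hΦ.continuous.comp (by fun_prop)).sub hcont)
  set K : Set (ℝ × ℝ) := (fun t => (t, s)) '' G n with hK
  have hKc : IsCompact K := hGc.image (by fun_prop)
  have hKs : K ⊆ oSq := by
    rintro _ ⟨t, ht, rfl⟩
    exact ⟨⟨by linarith [ht.1.1], by linarith [ht.1.2]⟩, hs⟩
  obtain ⟨δ, hδ, hδK⟩ := hKc.exists_cthickening_subset_open (isOpen_Ioo.prod isOpen_Ioo) hKs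
  refine ⟨(volume (G n)).toReal, ENNReal.toReal_pos hn.ne' hGc.measure_lt_top.ne,
    ⟨K, δ, 1 / ((n : ℝ) + 1), 1⟩, hKc, hδK, hδ, by positivity, one_pos, ?_, ?_⟩
  · rintro _ ⟨t, ht, rfl⟩ u hu0 hu
    exact ht.2 u hu0 hu
  · norm_num only [zero_add, pow_one, mul_one]
    rw [ENNReal.ofReal_toReal hGc.measure_lt_top.ne]
    refine le_trans ?_ (measure_preimage_add_right volume (m * s) (lam m '' K)).le
    refine measure_mono fun t ht => ⟨(t, s), ⟨t, ht, rfl⟩, rfl⟩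

/-- The construction for a function all of whose restrictions to the lines at heights in `S` have
derivative `± 1` almost everywhere, and which is straightened, together with `-Φ`, at arbitrarily
small scales. On some line one of the derivatives `1` and `-1` occurs on a set of positive
measure, and the construction is carried out for `Φ` or `-Φ` accordingly. -/
theorem exists_family_of_typical {Φ : ℝ × ℝ → ℝ} (hΦ : L1Lip Φ) {m : ℝ} (hm : |m| ≤ 1)
    {S : Bool → Set ℝ} (hS : ∀ b, Dense (S b)) (hSd : Disjoint (S false) (S true))
    (hA : ∀ b, ∀ s ∈ S b ∩ Ioo 0 1, ∀ᵐ t, t ∈ Ioo (0 : ℝ) 1 → |deriv (fun t => Φ (t, s)) t| = 1)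
    {W : ℕ → Set (ℝ × ℝ)} {wf : ℕ → ℝ → ℝ} (hWo : ∀ j, IsOpen (W j))
    (hW : ∀ j, FibreDense m (W j) (wf j))
    (hC : ∀ j, ∀ R > 0, ∃ r, 0 < r ∧ r < R ∧
      StraightAt Φ (kapS j) (tau (wf j) (epsS j) r) r)
    (hC' : ∀ j, ∀ R > 0, ∃ r, 0 < r ∧ r < R ∧
      StraightAt (-Φ) (kapS j) (tau (wf j) (epsS j) r) r) :
    ∃ K : (ℕ → Bool) → Set (ℝ × ℝ), Pairwise (fun ω ω' => Disjoint (K ω) (K ω')) ∧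
      ∀ ω, IsCompact (K ω) ∧ K ω ⊆ oSq ∧ (∀ j, K ω ⊆ W j) ∧
        0 < volume (lam m '' K ω) ∧ ∃ c : ℝ, |c| = 1 ∧
          ∀ x ∈ K ω, HasDerivAt (fun t => Φ (t, x.2)) c x.1 := by
  obtain ⟨s, hsS, hs⟩ : ∃ s ∈ S false, s ∈ Ioo (0 : ℝ) 1 := by
    obtain ⟨s, h1, h2⟩ := (hS false).inter_open_nonempty (Ioo 0 1) isOpen_Ioo
      ⟨1 / 2, by norm_num, by norm_num⟩
    exact ⟨s, h2, h1⟩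
  have hΦ' : L1Lip (-Φ) := fun p q => by
    rw [Pi.neg_apply, Pi.neg_apply, neg_sub_neg, abs_sub_comm]; exact hΦ p q
  have hderiv : ∀ s t, deriv (fun t => (-Φ) (t, s)) t = -deriv (fun t => Φ (t, s)) t := fun s t => by
    simp only [Pi.neg_apply]; exact deriv.fun_neg
  by_cases hpos : 0 < volume {t ∈ Icc (1 / 4 : ℝ) (3 / 4) | deriv (fun t => Φ (t, s)) t = 1}
  · obtain ⟨a₀, ha₀, D₀, hD₀⟩ := exists_init hΦ m hs hpos
    obtain ⟨K, hKd, hK⟩ := exists_family hΦ hm ha₀ hS hSd hA hWo hW hC hD₀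
    exact ⟨K, hKd, fun ω => ⟨(hK ω).1, (hK ω).2.1, (hK ω).2.2.1, (hK ω).2.2.2.1, 1, by simp,
      (hK ω).2.2.2.2⟩⟩
  · have hpos' : 0 < volume {t ∈ Icc (1 / 4 : ℝ) (3 / 4) | deriv (fun t => (-Φ) (t, s)) t = 1} := by
      rw [not_lt, nonpos_iff_eq_zero] at hpos
      rw [pos_iff_ne_zero]
      intro h
      have h3 : volume (Icc (1 / 4 : ℝ) (3 / 4)) = 0 := by
        refine measure_mono_null ?_ (measure_union_null (measure_union_null hpos h)
          (ae_iff.1 (hA false s ⟨hsS, hs⟩)))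
        intro t ht
        by_cases h4 : |deriv (fun t => Φ (t, s)) t| = 1
        · refine Or.inl ?_
          rcases eq_or_eq_neg_of_abs_eq h4 with h5 | h5
          · exact Or.inl ⟨ht, h5⟩
          · exact Or.inr ⟨ht, by rw [hderiv, h5, neg_neg]⟩
        · refine Or.inr fun h5 => h4 (h5 ⟨by linarith [ht.1], by linarith [ht.2]⟩)
      rw [Real.volume_Icc] at h3
      norm_num at h3
    obtain ⟨a₀, ha₀, D₀, hD₀⟩ := exists_init hΦ' m hs hpos'
    obtain ⟨K, hKd, hK⟩ := exists_family hΦ' hm ha₀ hS hSd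
      (fun b s hs => by simpa only [hderiv, abs_neg] using hA b s hs) hWo hW hC' hD₀
    refine ⟨K, hKd, fun ω => ⟨(hK ω).1, (hK ω).2.1, (hK ω).2.2.1, (hK ω).2.2.2.1, -1, by simp,
      fun x hx => ?_⟩⟩
    simpa using ((hK ω).2.2.2.2 x hx).fun_neg

/-- Each point of a bounded interval is within `b` of the centre of a ball contained in the dense
open set `O`, of a radius that does not depend on the point. -/
lemma exists_uniform_ball {O : Set ℝ} (hO : IsOpen O) (hd : Dense O) {b : ℝ} (hb : 0 < b) :
    ∃ w > 0, ∀ a ∈ Icc (-4 : ℝ) 4, ∃ o, |o - a| ≤ b ∧ ball o w ⊆ O := by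
  have h : ∀ a : ℝ, ∃ o, |o - a| ≤ b / 2 ∧ ∃ w > 0, ball o w ⊆ O := by
    intro a
    obtain ⟨o, ho, h⟩ := hd.exists_dist_lt a (half_pos hb)
    exact ⟨o, by rw [dist_comm, Real.dist_eq] at h; exact h.le, Metric.isOpen_iff.1 hO o ho⟩
  choose o ho w hw hwO using h
  obtain ⟨T, -, hT⟩ := isCompact_Icc.elim_nhds_subcover (s := Icc (-4 : ℝ) 4)
    (fun a => ball a (b / 2)) fun a _ => ball_mem_nhds a (half_pos hb)
  obtain ⟨v, hv, hv0⟩ := ((T.eventually_all (l := 𝓝[>] (0 : ℝ)) (p := fun a v => v ≤ w a)).2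
    fun a _ => by filter_upwards [Ioc_mem_nhdsGT (hw a)] with v hv using hv.2).and self_mem_nhdsWithin |>.exists
  refine ⟨v, hv0, fun a ha => ?_⟩
  obtain ⟨c, hc, hac⟩ := mem_iUnion₂.1 (hT ha)
  refine ⟨o c, ?_, (ball_subset_ball (hv c hc)).trans (hwO c)⟩
  rw [mem_ball, Real.dist_eq] at hac
  have := abs_le.1 (ho c)
  have := abs_lt.1 hac
  rw [abs_le]; constructor <;> linarith

/-- The preimage of a dense open set under a linear form that is transversal to the fibres of
`lam m` satisfies `FibreDense`, with a width function that depends only on the set. -/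
lemma exists_fibreDense {O : Set ℝ} (hO : IsOpen O) (hd : Dense O) :
    ∃ wf : ℝ → ℝ, ∀ m α β : ℝ, |m| ≤ 1 → |α| ≤ 1 → |β| ≤ 1 → 1 / 2 ≤ |β - α * m| →
      FibreDense m {x | α * x.1 + β * x.2 ∈ O} wf := by
  choose! w hw0 hw using fun b : ℝ => exists_uniform_ball (b := b) hO hd
  refine ⟨fun b => w (b / 2) / 2, fun m α β hm hα hβ hγ b hb =>
    ⟨half_pos (hw0 _ (half_pos hb)), fun y hy => ?_⟩⟩
  have hab : ∀ u v c : ℝ, |u| ≤ 1 → |v| ≤ c → |u * v| ≤ c := fun u v c h1 h2 => by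
    rw [abs_mul]; nlinarith [abs_nonneg u, abs_nonneg v]
  have h1 : |y.1| ≤ 1 := by rw [abs_le]; constructor <;> linarith [hy.1.1, hy.1.2]
  have h2 : |y.2| ≤ 1 := by rw [abs_le]; constructor <;> linarith [hy.2.1, hy.2.2]
  have h3 := abs_le.1 (hab _ _ _ hα h1)
  have h4 := abs_le.1 (hab _ _ _ hβ h2)
  obtain ⟨o, ho, hoO⟩ := hw (b / 2) (half_pos hb) (α * y.1 + β * y.2)
    ⟨by linarith, by linarith⟩
  have hγ0 : β - α * m ≠ 0 := fun h => by rw [h] at hγ; norm_num at hγ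
  refine ⟨(o - (α * y.1 + β * y.2)) / (β - α * m), ?_, fun x hx => hoO ?_⟩
  · rw [abs_div, div_le_iff₀ (by linarith)]
    nlinarith
  · set σ := (o - (α * y.1 + β * y.2)) / (β - α * m) with hσ
    have hσ' : (β - α * m) * σ = o - (α * y.1 + β * y.2) := by rw [hσ]; field_simp
    rw [Prod.dist_eq, max_lt_iff, Real.dist_eq, Real.dist_eq] at hx
    have e : α * x.1 + β * x.2 - o = α * (x.1 - (y.1 - m * σ)) + β * (x.2 - (y.2 + σ)) := by
      linear_combination hσ'
    have h5 : |α * (x.1 - (y.1 - m * σ))| < w (b / 2) / 2 := by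
      rw [abs_mul]; nlinarith [abs_nonneg α, abs_nonneg (x.1 - (y.1 - m * σ)), hx.1]
    have h6 : |β * (x.2 - (y.2 + σ))| < w (b / 2) / 2 := by
      rw [abs_mul]; nlinarith [abs_nonneg β, abs_nonneg (x.2 - (y.2 + σ)), hx.2]
    rw [mem_ball, Real.dist_eq, e]
    exact (abs_add_le _ _).trans_lt (by linarith)

/-! ### Differentiability from an extremal directional derivative -/

/-- The norm of `h + t v` is `t + ⟪v, h⟫` up to an error quadratic in `h`. -/
lemma norm_add_smul_le {E : Type*} [NormedAddCommGroup E] [InnerProductSpace ℝ E] {h v : E}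
    (hv : ‖v‖ = 1) {t : ℝ} (ht0 : 0 < t) (ht : ‖h‖ ≤ t) :
    ‖h + t • v‖ ≤ t + ⟪v, h⟫ + ‖h‖ ^ 2 / (2 * t) := by
  have h1 : |⟪v, h⟫| ≤ ‖h‖ := by simpa [hv] using abs_real_inner_le_norm v h
  have h2 := abs_le.1 h1
  have h3 : 0 ≤ ‖h‖ ^ 2 / (2 * t) := by positivity
  refine abs_le_of_sq_le_sq' ?_ (by linarith) |>.2
  have h4 : ‖h + t • v‖ ^ 2 = t ^ 2 + 2 * t * ⟪v, h⟫ + ‖h‖ ^ 2 := by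
    rw [norm_add_sq_real, real_inner_smul_right, norm_smul, hv, real_inner_comm, Real.norm_eq_abs,
      mul_one, sq_abs]
    ring
  have h5 : 2 * t * (‖h‖ ^ 2 / (2 * t)) = ‖h‖ ^ 2 := by field_simp
  rw [h4]
  nlinarith [sq_nonneg (⟪v, h⟫ + ‖h‖ ^ 2 / (2 * t))]

/-- A `1`-Lipschitz function whose derivative in a unit direction attains the largest possible
value is Fréchet differentiable. -/
lemma differentiableAt_of_slope_one {E : Type*} [NormedAddCommGroup E] [InnerProductSpace ℝ E]
    {F : E → ℝ} (hF : LipschitzWith 1 F) {x v : E} (hv : ‖v‖ = 1)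
    (hd : HasDerivAt (fun t : ℝ => F (x + t • v)) 1 0) : DifferentiableAt ℝ F x := by
  refine HasFDerivAt.differentiableAt (f' := innerSL ℝ v) ?_
  rw [hasFDerivAt_iff_isLittleO_nhds_zero, Asymptotics.isLittleO_iff]
  intro c hc
  set δ := min (c / 2) 1 with hδ
  have hδ0 : 0 < δ := by positivity
  have hδ1 : δ ≤ 1 := min_le_right _ _
  have hδc : δ ≤ c / 2 := min_le_left _ _
  rw [hasDerivAt_iff_isLittleO_nhds_zero, Asymptotics.isLittleO_iff] at hd
  obtain ⟨s, hs, hball⟩ := Metric.eventually_nhds_iff.1 (hd (show 0 < δ ^ 2 by positivity))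
  have hL : ∀ a b, F a ≤ F b + ‖a - b‖ := fun a b => by
    have := hF.dist_le_mul a b
    rw [Real.dist_eq, dist_eq_norm, NNReal.coe_one, one_mul] at this
    linarith [(abs_le.1 this).2]
  filter_upwards [Metric.ball_mem_nhds (0 : E) (show 0 < δ * s by positivity)] with h hh
  rw [mem_ball, dist_zero_right] at hh
  rcases eq_or_ne h 0 with rfl | hne
  · simp
  have hn : 0 < ‖h‖ := norm_pos_iff.2 hne
  set t := ‖h‖ / δ with ht
  have ht0 : 0 < t := by positivity
  have hδt : δ * t = ‖h‖ := by rw [ht]; field_simp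
  have hts : t < s := by rw [ht, div_lt_iff₀ hδ0]; linarith
  have hht : ‖h‖ ≤ t := by nlinarith
  have hpos := hball (y := t) (by rwa [Real.dist_eq, sub_zero, abs_of_pos ht0])
  have hneg := hball (y := -t) (by rwa [Real.dist_eq, sub_zero, abs_neg, abs_of_pos ht0])
  simp only [zero_add, zero_smul, add_zero, smul_eq_mul, mul_one, Real.norm_eq_abs, neg_smul,
    abs_neg, abs_of_pos ht0] at hpos hneg
  have hpos := abs_le.1 hpos
  have hneg := abs_le.1 hneg
  have e1 : δ ^ 2 * t = δ * ‖h‖ := by rw [← hδt]; ring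
  have e2 : ‖h‖ ^ 2 / (2 * t) = δ * ‖h‖ / 2 := by rw [← hδt]; field_simp
  have n1 := norm_add_smul_le (h := h) hv ht0 hht
  have n2 := norm_add_smul_le (h := -h) hv ht0 (by rwa [norm_neg])
  rw [inner_neg_right, norm_neg, e2] at n2
  rw [e2] at n1
  have l1 := hL (x + h) (x + -(t • v))
  have l2 := hL (x + t • v) (x + h)
  rw [show x + h - (x + -(t • v)) = h + t • v by abel] at l1
  rw [show x + t • v - (x + h) = -h + t • v by abel] at l2
  rw [Real.norm_eq_abs, innerSL_apply_apply, abs_le]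
  constructor <;> nlinarith

lemma differentiableAt_of_abs_slope_one {E : Type*} [NormedAddCommGroup E] [InnerProductSpace ℝ E]
    {F : E → ℝ} (hF : LipschitzWith 1 F) {x v : E} (hv : ‖v‖ = 1) {c : ℝ} (hc : |c| = 1)
    (hd : HasDerivAt (fun t : ℝ => F (x + t • v)) c 0) : DifferentiableAt ℝ F x := by
  rcases eq_or_eq_neg_of_abs_eq hc with rfl | rfl
  · exact differentiableAt_of_slope_one hF hv hd
  · refine differentiableAt_of_slope_one hF (v := -v) (by rwa [norm_neg]) ?_
    have h0 : HasDerivAt (fun t : ℝ => F (x + t • v)) (-1) (-0) := by rwa [neg_zero]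
    have := h0.comp (0 : ℝ) (hasDerivAt_neg (0 : ℝ))
    simpa [Function.comp_def] using this

/-! ### Derivatives of typical functions on lines -/

/-- The point of the plane with coordinates `p`, which are swapped when `o = true`. -/
def pt (o : Bool) (p : ℝ × ℝ) : E2 := !₂[bif o then p.2 else p.1, bif o then p.1 else p.2]

lemma norm_pt_le (o : Bool) (p : ℝ × ℝ) : ‖pt o p‖ ≤ |p.1| + |p.2| := by
  rw [EuclideanSpace.norm_eq, Fin.sum_univ_two]
  refine Real.sqrt_le_iff.2 ⟨by positivity, ?_⟩
  cases o <;> simp [pt] <;> nlinarith [abs_nonneg p.1, abs_nonneg p.2, sq_abs p.1, sq_abs p.2,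
    mul_nonneg (abs_nonneg p.1) (abs_nonneg p.2)]

lemma pt_sub (o : Bool) (p q : ℝ × ℝ) : pt o p - pt o q = pt o (p - q) := by
  ext i; fin_cases i <;> cases o <;> simp [pt]

lemma pt_add (o : Bool) (p q : ℝ × ℝ) : pt o p + pt o q = pt o (p + q) := by
  ext i; fin_cases i <;> cases o <;> simp [pt]

lemma norm_pt_fst (o : Bool) (t : ℝ) : ‖pt o (t, 0)‖ = |t| := by
  rw [EuclideanSpace.norm_eq, Fin.sum_univ_two]
  cases o <;> simp [pt, Real.sqrt_sq_eq_abs]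

lemma pt_mem {o : Bool} {p : ℝ × ℝ} : pt o p ∈ unitSquare ↔ p ∈ cSq := by
  cases o <;> simp [pt, unitSquare, cSq, Fin.forall_fin_two, and_comm, -Icc_prod_Icc, mem_prod]

lemma L1Lip_comp_pt {F : E2 → ℝ} (hF : LipschitzWith 1 F) (o : Bool) :
    L1Lip fun p => F (pt o p) := fun p q => by
  have := hF.dist_le_mul (pt o p) (pt o q)
  rw [Real.dist_eq, dist_eq_norm, pt_sub, NNReal.coe_one, one_mul] at this
  exact this.trans (norm_pt_le o _)

lemma compactSpace_unitSquare : CompactSpace unitSquare := by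
  rw [← isCompact_iff_compactSpace]
  have : unitSquare = (EuclideanSpace.equiv (Fin 2) ℝ) ⁻¹' (Set.pi univ fun _ => Icc (0 : ℝ) 1) := by
    ext x; simp [unitSquare, -pi_univ_Icc, Set.mem_pi]
  rw [this]
  exact (EuclideanSpace.equiv (Fin 2) ℝ).toHomeomorph.isClosedEmbedding.isCompact_preimage
    (isCompact_univ_pi fun _ => isCompact_Icc)

lemma exists_extF (f : Lip1) : ∃ F : E2 → ℝ, LipschitzWith 1 F ∧
    ∀ x (h : x ∈ unitSquare), F x = f.1 ⟨x, h⟩ := by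
  have h1 : LipschitzOnWith 1 (ext2 f.1) unitSquare := by
    intro x hx y hy
    simpa [ext2, hx, hy] using f.2 ⟨x, hx⟩ ⟨y, hy⟩
  obtain ⟨F, hF, h⟩ := h1.extend_real
  exact ⟨F, hF, fun x hx => by rw [← h hx]; simp [ext2, hx]⟩

/-- A `1`-Lipschitz extension of `f` to the plane. -/
def extF (f : Lip1) : E2 → ℝ := (exists_extF f).choose

lemma lipschitz_extF (f : Lip1) : LipschitzWith 1 (extF f) := (exists_extF f).choose_spec.1

lemma extF_eq (f : Lip1) {x : E2} (h : x ∈ unitSquare) : extF f x = f.1 ⟨x, h⟩ :=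
  (exists_extF f).choose_spec.2 x h

/-- Evaluation at a point of the square is continuous on the space of `1`-Lipschitz functions. -/
lemma continuous_extF {x : E2} (h : x ∈ unitSquare) : Continuous fun f : Lip1 => extF f x := by
  simp only [fun f => extF_eq f h]
  exact (continuous_eval_const _).comp (by fun_prop)

lemma exists_lip1_of_lipschitz {G : E2 → ℝ} (hG : LipschitzWith 1 G) :
    ∃ g : Lip1, ∀ x ∈ unitSquare, extF g x = G x :=
  ⟨⟨⟨fun x => G x, hG.continuous.comp continuous_subtype_val⟩,
    by simpa [Function.comp_def] using hG.comp (LipschitzWith.subtype_val unitSquare)⟩, fun x hx => by rw [extF_eq _ hx]; rfl⟩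

/-- A criterion for density in the space of `1`-Lipschitz functions, in terms of functions on the
whole plane. -/
lemma dense_of_approx {U : Set Lip1} (h : ∀ f : Lip1, ∀ η > 0, ∃ G : E2 → ℝ, LipschitzWith 1 G ∧
    (∀ x ∈ unitSquare, |G x - extF f x| ≤ η) ∧
    ∀ g : Lip1, (∀ x ∈ unitSquare, extF g x = G x) → g ∈ U) : Dense U := by
  have := compactSpace_unitSquare
  refine Metric.dense_iff.2 fun f η hη => ?_
  obtain ⟨G, hG, hGf, hGU⟩ := h f (η / 2) (half_pos hη)
  obtain ⟨g, hg⟩ := exists_lip1_of_lipschitz hG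
  refine ⟨g, ?_, hGU g hg⟩
  rw [mem_ball, Subtype.dist_eq]
  refine lt_of_le_of_lt ((ContinuousMap.dist_le (half_pos hη).le).2 fun x => ?_) (half_lt_self hη)
  rw [Real.dist_eq]
  have := hGf x x.2
  rw [← hg x x.2, extF_eq _ x.2, extF_eq _ x.2] at this
  exact this

/-- A `1`-Lipschitz function can be perturbed to take prescribed values, as long as these are
compatible with the Lipschitz condition. -/
lemma exists_perturb {F u : E2 → ℝ} (hF : LipschitzWith 1 F) {A : Set E2}
    (hu : LipschitzOnWith 1 u A) {δ : ℝ} (hδ : 0 ≤ δ) (h : ∀ x ∈ A, |u x - F x| ≤ δ) :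
    ∃ G : E2 → ℝ, LipschitzWith 1 G ∧ (∀ x, |G x - F x| ≤ δ) ∧ ∀ x ∈ A, G x = u x := by
  obtain ⟨U, hU, hUu⟩ := hu.extend_real
  have h1 : LipschitzWith 1 fun x => F x - δ := by
    simpa [sub_eq_add_neg] using hF.add (LipschitzWith.const (-δ))
  have h2 : LipschitzWith 1 fun x => F x + δ := by
    simpa using hF.add (LipschitzWith.const δ)
  refine ⟨fun x => max (F x - δ) (min (F x + δ) (U x)), by simpa using h1.max (h2.min hU),
    fun x => ?_, fun x hx => ?_⟩
  · rw [abs_le]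
    constructor
    · linarith [le_max_left (F x - δ) (min (F x + δ) (U x))]
    · have : max (F x - δ) (min (F x + δ) (U x)) ≤ F x + δ :=
        max_le (by linarith) (min_le_left _ _)
      linarith
  · have := abs_le.1 (h x hx)
    beta_reduce
    rw [← hUu hx, min_eq_right (by linarith), max_eq_right (by linarith)]

/-- The zigzag with steps `± h` that follows the sequence `g`. -/
def zig (g : ℕ → ℝ) (h : ℝ) : ℕ → ℝ
  | 0 => g 0
  | n + 1 => if zig g h n ≤ g n then zig g h n + h else zig g h n - h

lemma abs_zig_succ (g : ℕ → ℝ) {h : ℝ} (hh : 0 ≤ h) (n : ℕ) : |zig g h (n + 1) - zig g h n| = h := by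
  rw [zig]; split_ifs <;> simp [abs_of_nonneg hh]

lemma abs_zig_add (g : ℕ → ℝ) {h : ℝ} (hh : 0 ≤ h) (n k : ℕ) :
    |zig g h (n + k) - zig g h n| ≤ k * h := by
  induction k with
  | zero => simp
  | succ k ih =>
    have h1 := abs_zig_succ g hh (n + k)
    have h2 := abs_sub_le (zig g h (n + k + 1)) (zig g h (n + k)) (zig g h n)
    rw [← add_assoc]; push_cast; linarith

lemma abs_zig_sub_le (g : ℕ → ℝ) {h : ℝ} (hh : 0 ≤ h) (hg : ∀ n, |g (n + 1) - g n| ≤ h) (n : ℕ) :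
    |zig g h n - g n| ≤ 2 * h := by
  induction n with
  | zero => simp [zig, hh]
  | succ n ih =>
    have h1 := abs_le.1 (hg n)
    have h2 := abs_le.1 ih
    rw [zig, abs_le]
    split_ifs with hc
    · constructor <;> linarith
    · constructor <;> linarith

/-- If the increments of a `1`-Lipschitz function over partitions of `[0, 1]` add up to nearly `1`,
then its derivative is `± 1` almost everywhere. -/
lemma ae_abs_deriv_eq_one {φ : ℝ → ℝ} (hφ : LipschitzWith 1 φ)
    (h : ∀ c < 1, ∃ N : ℕ, 0 < N ∧
      c < ∑ i ∈ Finset.range N, |φ ((i + 1) / N) - φ (i / N)|) :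
    ∀ᵐ t, t ∈ Ioo (0 : ℝ) 1 → |deriv φ t| = 1 := by
  have hac : ∀ a b, AbsolutelyContinuousOnInterval φ a b := fun a b =>
    hφ.lipschitzOnWith.absolutelyContinuousOnInterval
  have hint : ∀ a b, IntervalIntegrable (fun t => |deriv φ t|) volume a b := fun a b =>
    (hac a b).intervalIntegrable_deriv.abs
  have hle : ∀ t, |deriv φ t| ≤ 1 := fun t => by
    simpa using norm_deriv_le_of_lipschitz (x₀ := t) hφ
  have hge : 1 ≤ ∫ t in (0 : ℝ)..1, |deriv φ t| := by
    refine le_of_forall_lt fun c hc => ?_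
    obtain ⟨N, hN, hcN⟩ := h c hc
    have hN' : (0 : ℝ) < N := by exact_mod_cast hN
    refine hcN.trans_le ?_
    have := intervalIntegral.sum_integral_adjacent_intervals (f := fun t => |deriv φ t|)
      (μ := volume) (a := fun i : ℕ => (i : ℝ) / N) (n := N) fun k _ => hint _ _
    simp only [Nat.cast_zero, zero_div, div_self hN'.ne'] at this
    rw [← this]
    refine Finset.sum_le_sum fun i _ => ?_
    push_cast
    rw [← (hac _ _).integral_deriv_eq_sub]
    exact intervalIntegral.abs_integral_le_integral_abs (by gcongr; linarith)
  have hz : ∫ t in (0 : ℝ)..1, (1 - |deriv φ t|) = 0 := by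
    have h1 : ∫ t in (0 : ℝ)..1, (1 - |deriv φ t|) = 1 - ∫ t in (0 : ℝ)..1, |deriv φ t| := by
      rw [intervalIntegral.integral_sub (by simp) (hint 0 1)]; simp
    have h2 : 0 ≤ ∫ t in (0 : ℝ)..1, (1 - |deriv φ t|) :=
      intervalIntegral.integral_nonneg (by norm_num) fun t _ => sub_nonneg.2 (hle t)
    linarith
  rw [intervalIntegral.integral_eq_zero_iff_of_nonneg_ae
    (Eventually.of_forall fun t => sub_nonneg.2 (hle t))
    (intervalIntegrable_const.sub (hint 0 1))] at hz
  have hz' := (ae_restrict_iff' (measurableSet_Ioc.union measurableSet_Ioc)).1 hz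
  filter_upwards [hz'] with t ht hti
  have := ht (Or.inl ⟨hti.1, hti.2.le⟩)
  simp only [Pi.zero_apply] at this
  linarith

lemma lipschitz_line {F : E2 → ℝ} (hF : LipschitzWith 1 F) (o : Bool) (s : ℝ) :
    LipschitzWith 1 fun t => F (pt o (t, s)) :=
  LipschitzWith.of_dist_le_mul fun a b => by
    simpa [Real.dist_eq] using L1Lip_comp_pt hF o (a, s) (b, s)

/-- On a given line in a coordinate direction, the derivative of the typical function is `± 1`
almost everywhere. By `ae_abs_deriv_eq_one` this follows if the variation over some uniform
partition is nearly `1`, which is an open condition; it is also dense, because one may prescribe a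
fine zigzag of slopes `± 1` on the line. -/
lemma typical_deriv (o : Bool) {s : ℝ} (hs : s ∈ Icc (0 : ℝ) 1) :
    {f : Lip1 | ∀ᵐ t, t ∈ Ioo (0 : ℝ) 1 → |deriv (fun t => extF f (pt o (t, s))) t| = 1}
      ∈ residual Lip1 := by
  set U : ℕ → Set Lip1 := fun m => ⋃ N : ℕ, ⋃ _ : 0 < N, {f : Lip1 | 1 - 1 / ((m : ℝ) + 1) <
      ∑ i ∈ Finset.range N, |extF f (pt o (((i : ℝ) + 1) / N, s)) - extF f (pt o (i / N, s))|}
    with hU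
  have hmem : ∀ N : ℕ, ∀ i ≤ N, pt o ((i : ℝ) / N, s) ∈ unitSquare := fun N i hi =>
    pt_mem.2 ⟨⟨by positivity, div_le_one_of_le₀ (by exact_mod_cast hi) (by positivity)⟩, hs⟩
  have hUo : ∀ m, IsOpen (U m) := fun m => isOpen_iUnion fun N => isOpen_iUnion fun _ => by
    refine isOpen_lt continuous_const (continuous_finsetSum _ fun i hi => ?_)
    rw [Finset.mem_range] at hi
    refine (Continuous.sub ?_ ?_).abs
    · have := hmem N (i + 1) hi
      push_cast at this
      exact continuous_extF this
    · exact continuous_extF (hmem N i hi.le)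
  have hUd : ∀ m, Dense (U m) := fun m => dense_of_approx fun f η hη => by
    obtain ⟨n, hn⟩ := exists_nat_one_div_lt (half_pos hη)
    set N : ℕ := n + 1 with hN
    set h : ℝ := 1 / N with hh
    have hN0 : (0 : ℝ) < N := by rw [hN]; positivity
    have hh0 : 0 < h := by positivity
    set p : ℕ → E2 := fun i => pt o ((i : ℝ) / N, s) with hp
    have hpd : ∀ i j, ‖p i - p j‖ = |(i : ℝ) - j| * h := fun i j => by
      simp only [hp, pt_sub, Prod.mk_sub_mk, sub_self, norm_pt_fst]
      rw [← sub_div, abs_div, abs_of_pos hN0, hh]; ring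
    have hpi : Function.Injective p := fun i j hij => by
      have h1 := hpd i j
      rw [hij, sub_self, norm_zero] at h1
      have h2 : |(i : ℝ) - j| = 0 := by
        rcases mul_eq_zero.1 h1.symm with h2 | h2
        · exact h2
        · exact absurd h2 hh0.ne'
      exact_mod_cast sub_eq_zero.1 (abs_eq_zero.1 h2)
    set g : ℕ → ℝ := fun i => extF f (p i) with hg
    set u : E2 → ℝ := Function.extend p (zig g h) 0 with hu
    have hup : ∀ i, u (p i) = zig g h i := fun i => hpi.extend_apply _ _ _
    have hgs : ∀ i, |g (i + 1) - g i| ≤ h := fun i => by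
      have := (lipschitz_extF f).dist_le_mul (p (i + 1)) (p i)
      rw [Real.dist_eq, dist_eq_norm, hpd] at this
      simpa using this
    have hul : LipschitzOnWith 1 u (range p) := by
      refine LipschitzOnWith.of_dist_le_mul ?_
      rintro _ ⟨i, rfl⟩ _ ⟨j, rfl⟩
      rw [hup, hup, dist_eq_norm (p i), hpd, NNReal.coe_one, one_mul, Real.dist_eq]
      rcases le_total i j with hij | hij
      · obtain ⟨k, rfl⟩ := Nat.exists_eq_add_of_le hij
        rw [abs_sub_comm]
        simpa using abs_zig_add g hh0.le i k
      · obtain ⟨k, rfl⟩ := Nat.exists_eq_add_of_le hij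
        simpa using abs_zig_add g hh0.le j k
    obtain ⟨G, hG, hGF, hGu⟩ := exists_perturb (lipschitz_extF f) hul (δ := 2 * h) (by positivity) (by
      rintro _ ⟨i, rfl⟩
      rw [hup]
      exact abs_zig_sub_le g hh0.le hgs i)
    refine ⟨G, hG, fun x _ => (hGF x).trans ?_, fun g' hg' => ?_⟩
    · rw [hh, hN]; push_cast; linarith
    · simp only [hU, mem_iUnion]
      refine ⟨N, Nat.succ_pos n, ?_⟩
      have hsum : ∀ i ∈ Finset.range N, |extF g' (pt o (((i : ℝ) + 1) / N, s)) -
          extF g' (pt o (i / N, s))| = h := fun i hi => by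
        rw [Finset.mem_range] at hi
        have h1 := hmem N (i + 1) hi
        have h2 := hGu _ (mem_range_self (i + 1))
        rw [hup] at h2
        simp only [hp] at h2
        push_cast at h1 h2
        rw [hg' _ h1, hg' _ (hmem N i hi.le), h2, hGu _ (mem_range_self i), hup,
          abs_zig_succ g hh0.le]
      rw [Set.mem_ofPred_eq]
      rw [Finset.sum_congr rfl hsum, Finset.sum_const, Finset.card_range, nsmul_eq_mul, hh,
        mul_one_div_cancel hN0.ne']
      have : (0 : ℝ) < 1 / (m + 1) := by positivity
      linarith
  have hall : (⋂ m, U m) ∈ residual Lip1 :=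
    countable_iInter_mem.2 fun m => residual_of_dense_open (hUo m) (hUd m)
  filter_upwards [hall] with f hf
  refine ae_abs_deriv_eq_one (lipschitz_line (lipschitz_extF f) o s) fun c hc => ?_
  obtain ⟨m, hm⟩ := exists_nat_one_div_lt (sub_pos.2 hc)
  have := mem_iInter.1 hf m
  simp only [hU, mem_iUnion] at this
  obtain ⟨N, hN, h⟩ := this
  exact ⟨N, hN, lt_trans (by linarith) h⟩

/-! ### Typical functions are straightened at small scales -/

/-- The average of `F` over segments of length `a` in the direction of the first coordinate. -/
def avg (F : E2 → ℝ) (o : Bool) (a : ℝ) (p : E2) : ℝ := a⁻¹ * ∫ x in (0 : ℝ)..a, F (p + pt o (x, 0))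

lemma continuous_pt (o : Bool) : Continuous (pt o) := by
  refine (LipschitzWith.of_dist_le_mul (K := 2) fun p q => ?_).continuous
  have h := (dist_prod_le (p := p) (q := q)).1 le_rfl
  rw [dist_eq_norm, pt_sub, NNReal.coe_ofNat]
  have := norm_pt_le o (p - q)
  simp only [Prod.fst_sub, Prod.snd_sub] at this
  linarith [h.1, h.2]

lemma abs_integral_avg_le {F G : E2 → ℝ} (hF : Continuous F) (hG : Continuous G) (o : Bool) {a c : ℝ}
    (ha : 0 < a) (p q : E2) (h : ∀ x, 0 ≤ x → x ≤ a → |F (p + pt o (x, 0)) - G (q + pt o (x, 0))| ≤ c) :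
    |avg F o a p - avg G o a q| ≤ c := by
  have hc := continuous_pt o
  unfold avg
  rw [← mul_sub, ← intervalIntegral.integral_sub
    (Continuous.intervalIntegrable (by fun_prop) _ _) (Continuous.intervalIntegrable (by fun_prop) _ _),
    abs_mul, abs_of_pos (inv_pos.2 ha)]
  have := intervalIntegral.norm_integral_le_of_norm_le_const (a := 0) (b := a) (C := c)
    (f := fun x => F (p + pt o (x, 0)) - G (q + pt o (x, 0))) fun x hx => by
      rw [uIoc_of_le ha.le] at hx
      exact h x hx.1.le hx.2
  rw [Real.norm_eq_abs, sub_zero, abs_of_pos ha] at this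
  rw [inv_mul_le_iff₀ ha]; linarith

lemma lipschitz_avg {F : E2 → ℝ} (hF : LipschitzWith 1 F) (o : Bool) {a : ℝ} (ha : 0 < a) :
    LipschitzWith 1 (avg F o a) := LipschitzWith.of_dist_le_mul fun p q => by
  rw [Real.dist_eq, NNReal.coe_one, one_mul]
  refine abs_integral_avg_le hF.continuous hF.continuous o ha p q fun x _ _ => ?_
  simpa [Real.dist_eq] using hF.dist_le_mul (p + pt o (x, 0)) (q + pt o (x, 0))

lemma avg_sub_le {F : E2 → ℝ} (hF : LipschitzWith 1 F) (o : Bool) {a : ℝ} (ha : 0 < a) (p : E2) :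
    |avg F o a p - F p| ≤ a := by
  have h1 : avg (fun _ => F p) o a p = F p := by
    simp [avg, ha.ne']
  rw [← h1]
  refine abs_integral_avg_le hF.continuous continuous_const o ha p p fun x h0 hx => ?_
  have := hF.dist_le_mul (p + pt o (x, 0)) p
  rw [Real.dist_eq, dist_eq_norm, add_sub_cancel_left, norm_pt_fst, abs_of_nonneg h0,
    NNReal.coe_one, one_mul] at this
  exact this.trans hx

lemma hasDerivAt_avg {F : E2 → ℝ} (hF : Continuous F) (o : Bool) (a s t : ℝ) :
    HasDerivAt (fun t => avg F o a (pt o (t, s)))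
      (a⁻¹ * (F (pt o (t + a, s)) - F (pt o (t, s)))) t := by
  set φ : ℝ → ℝ := fun x => F (pt o (x, s)) with hφ
  have hc := continuous_pt o
  have hφc : Continuous φ := by fun_prop
  have hI : ∀ t, avg F o a (pt o (t, s)) = a⁻¹ * ((∫ x in (0 : ℝ)..(t + a), φ x) - ∫ x in (0 : ℝ)..t, φ x) := by
    intro t
    rw [intervalIntegral.integral_interval_sub_left (hφc.intervalIntegrable _ _)
      (hφc.intervalIntegrable _ _)]
    have := intervalIntegral.integral_comp_add_left (a := 0) (b := a) φ t
    rw [add_zero] at this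
    rw [← this]
    simp only [avg, pt_add, hφ, Prod.mk_add_mk, add_zero]
  simp only [hI]
  have hH : ∀ t, HasDerivAt (fun t => ∫ x in (0 : ℝ)..t, φ x) (φ t) t := fun t =>
    intervalIntegral.integral_hasDerivAt_right (hφc.intervalIntegrable _ _)
      (hφc.stronglyMeasurableAtFilter _ _) hφc.continuousAt
  exact (((hH (t + a)).comp_add_const t a).sub (hH t)).const_mul _

/-- At scales much smaller than `a`, the slopes of the average over length `a` vary little. -/
lemma avg_flat {F : E2 → ℝ} (hF : LipschitzWith 1 F) (o : Bool) {a r : ℝ} (ha : 0 < a)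
    {y z : ℝ × ℝ} (hzy : dist z y ≤ 2 * r) {t : ℝ} (ht0 : 0 < t) (ht : t ≤ r) :
    |avg F o a (pt o (z.1 + t, z.2)) - avg F o a (pt o z) -
      t * (a⁻¹ * (F (pt o (y.1 + a, y.2)) - F (pt o y)))| ≤ 10 * r / a * t := by
  set D := a⁻¹ * (F (pt o (y.1 + a, y.2)) - F (pt o y)) with hD
  have hd := dist_prod_le.1 hzy
  have hΦ := L1Lip_comp_pt hF o
  have := (convex_Icc z.1 (z.1 + t)).norm_image_sub_le_of_norm_hasDerivWithin_le
    (f := fun x => avg F o a (pt o (x, z.2)) - x * D)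
    (f' := fun x => a⁻¹ * (F (pt o (x + a, z.2)) - F (pt o (x, z.2))) - 1 * D) (C := 10 * r / a)
    (fun x _ => ((hasDerivAt_avg hF.continuous o a z.2 x).sub
      ((hasDerivAt_id x).mul_const D)).hasDerivWithinAt) (fun x hx => ?_)
    (left_mem_Icc.2 (by linarith : z.1 ≤ z.1 + t)) (right_mem_Icc.2 (by linarith))
  · rw [Real.norm_eq_abs, Real.norm_eq_abs, add_sub_cancel_left, abs_of_pos ht0] at this
    convert this using 2
    ring
  · rw [one_mul, hD, ← mul_sub, norm_mul, norm_inv, Real.norm_of_nonneg ha.le, Real.norm_eq_abs,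
      inv_mul_le_iff₀ ha, mul_div_cancel₀ _ ha.ne']
    have h1 := hΦ (x + a, z.2) (y.1 + a, y.2)
    have h2 := hΦ (x, z.2) y
    simp only [add_sub_add_right_eq_sub] at h1
    have h3 : |x - y.1| ≤ 3 * r := by
      have := abs_le.1 hd.1
      rw [abs_le]; constructor <;> linarith [hx.1, hx.2]
    have h1 := abs_le.1 h1
    have h2 := abs_le.1 h2
    rw [abs_le]; constructor <;> linarith [hd.2]

/-- A function that is uniformly close to a function whose slopes are nearly constant, at scales
up to `r` and at distance up to `2 r`, is straightened at scale `r`. -/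
lemma straightAt_of_close {Φ Γ : ℝ × ℝ → ℝ} {κ τ r δ c : ℝ} (hκ : 0 < κ) (hr : 0 < r) (hτ : 0 < τ)
    (hδ : 8 * δ ≤ κ * τ) (hc : |c| = 1)
    (hΓ : ∀ y : ℝ × ℝ, ∃ D, ∀ z, dist z y ≤ 2 * r → ∀ t, 0 < t → t ≤ r →
      |Γ (z.1 + t, z.2) - Γ z - t * D| ≤ κ / 4 * t)
    (h : ∀ y ∈ cSq, |Φ y - Γ y| ≤ δ) : StraightAt (fun p => c * Φ p) κ τ r := by
  intro y hy hyr hslope z hz hzy t hτt htr hzt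
  have ht : 0 < t := hτ.trans_le hτt
  obtain ⟨D, hD⟩ := hΓ y
  have h1 := abs_le.1 (hD z hzy t ht htr)
  have h2 := abs_le.1 (hD y (by simp; positivity) r hr le_rfl)
  have hy1 := abs_le.1 (h y hy)
  have hy2 := abs_le.1 (h _ hyr)
  have hz1 := abs_le.1 (h z hz)
  have hz2 := abs_le.1 (h _ hzt)
  have hδt : 8 * δ ≤ κ * t := hδ.trans (by gcongr)
  have hδr : 8 * δ ≤ κ * r := hδt.trans (by gcongr)
  rcases eq_or_eq_neg_of_abs_eq hc with rfl | rfl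
  · have h3 : (1 - 3 / 2 * κ) * r ≤ D * r := by linarith
    have h4 := le_of_mul_le_mul_right h3 hr
    nlinarith [mul_le_mul_of_nonneg_right h4 ht.le]
  · have h3 : (1 - 3 / 2 * κ) * r ≤ -D * r := by linarith
    have h4 := le_of_mul_le_mul_right h3 hr
    nlinarith [mul_le_mul_of_nonneg_right h4 ht.le]

/-- The typical function is straightened at arbitrarily small scales `r`, down to the scale `τ r`,
for any positive function `τ`. Averaging a function over a length `a` in the given direction
changes it little and makes its slopes nearly constant at scales much smaller than `a`. This
passes to all functions that are close enough to the average, in terms of `τ r`. -/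
lemma typical_straight (o : Bool) {c κ : ℝ} (hc : |c| = 1) (hκ : 0 < κ) {τ : ℝ → ℝ}
    (hτ : ∀ r > 0, 0 < τ r) :
    {f : Lip1 | ∀ R > 0, ∃ r, 0 < r ∧ r < R ∧
      StraightAt (fun p => c * extF f (pt o p)) κ (τ r) r} ∈ residual Lip1 := by
  have := compactSpace_unitSquare
  set U : ℕ → Set Lip1 := fun m => ⋃ (G : Lip1) (r : ℝ) (_ : (0 < r ∧ r < 1 / ((m : ℝ) + 1)) ∧
    ∃ Γ : E2 → ℝ, (∀ x ∈ unitSquare, extF G x = Γ x) ∧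
      ∀ y : ℝ × ℝ, ∃ D, ∀ z, dist z y ≤ 2 * r → ∀ t, 0 < t → t ≤ r →
        |Γ (pt o (z.1 + t, z.2)) - Γ (pt o z) - t * D| ≤ κ / 4 * t), ball G (κ * τ r / 8) with hU
  have hUo : ∀ m, IsOpen (U m) := fun m =>
    isOpen_iUnion fun G => isOpen_iUnion fun r => isOpen_iUnion fun _ => isOpen_ball
  have hUd : ∀ m, Dense (U m) := fun m => dense_of_approx fun f η hη => by
    set a : ℝ := min η (1 / (κ * (m + 1))) with ha
    have ha0 : 0 < a := by positivity
    refine ⟨avg (extF f) o a, lipschitz_avg (lipschitz_extF f) o ha0, fun x _ =>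
      (avg_sub_le (lipschitz_extF f) o ha0 x).trans (min_le_left _ _), fun g hg => ?_⟩
    -- `κ * a / 40` is the scale at which the bound `10 * r / a` of `avg_flat` equals `κ / 4`
    have hr0 : 0 < κ * a / 40 := by positivity
    simp only [hU, mem_iUnion]
    refine ⟨g, κ * a / 40, ⟨⟨hr0, ?_⟩, _, hg, fun y => ⟨_, fun z hz t ht0 ht =>
      (avg_flat (lipschitz_extF f) o ha0 hz ht0 ht).trans ?_⟩⟩, mem_ball_self (by
        have := hτ _ hr0
        positivity)⟩
    · have h1 : κ * a ≤ κ * (1 / (κ * (m + 1))) := by gcongr; exact min_le_right _ _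
      have h2 : κ * (1 / (κ * (m + 1))) = 1 / ((m : ℝ) + 1) := by field_simp
      rw [h2] at h1
      linarith [mul_pos hκ ha0]
    · refine mul_le_mul_of_nonneg_right (le_of_eq ?_) ht0.le
      field_simp; norm_num
  have hall : (⋂ m, U m) ∈ residual Lip1 :=
    countable_iInter_mem.2 fun m => residual_of_dense_open (hUo m) (hUd m)
  filter_upwards [hall] with f hf R hR
  obtain ⟨m, hm⟩ := exists_nat_one_div_lt hR
  have := mem_iInter.1 hf m
  simp only [hU, mem_iUnion] at this
  obtain ⟨G, r, ⟨⟨hr0, hrm⟩, Γ, hGΓ, hΓ⟩, hfG⟩ := this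
  refine ⟨r, hr0, hrm.trans hm, straightAt_of_close (δ := κ * τ r / 8) hκ hr0 (hτ r hr0) (by linarith) hc
    (Γ := fun p => Γ (pt o p)) hΓ fun y hy => ?_⟩
  have hy' := pt_mem (o := o).2 hy
  rw [← hGΓ _ hy', extF_eq _ hy', extF_eq _ hy']
  rw [mem_ball, Subtype.dist_eq] at hfG
  exact (ContinuousMap.dist_apply_le_dist (f := f.1) (g := G.1) ⟨_, hy'⟩).trans hfG.le

/-! ### The purely unrectifiable set -/

/-- The linear form with coefficients `n`. -/
def lf (n : ℝ × ℝ) (x : E2) : ℝ := n.1 * x 0 + n.2 * x 1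

lemma continuous_lf (n : ℝ × ℝ) : Continuous (lf n) := by unfold lf; fun_prop

/-- The points of the unit square that are sent into `O j` by `lf (n j)`, for every `j`. -/
def pSet (O : ℕ → Set ℝ) (n : ℕ → ℝ × ℝ) : Set E2 := unitSquare ∩ ⋂ j, lf (n j) ⁻¹' O j

lemma isClosed_unitSquare : IsClosed unitSquare := by
  have := compactSpace_unitSquare
  exact (isCompact_iff_compactSpace.2 this).isClosed

lemma measurableSet_pSet {O : ℕ → Set ℝ} (hO : ∀ j, IsOpen (O j)) (n : ℕ → ℝ × ℝ) :
    MeasurableSet (pSet O n) :=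
  isClosed_unitSquare.measurableSet.inter <| MeasurableSet.iInter fun j =>
    ((hO j).preimage (continuous_lf _)).measurableSet

/-- An expanding map does not decrease the measure of a preimage by more than its factor. -/
lemma volume_preimage_le {g : ℝ → ℝ} {T O : Set ℝ} {c : ℝ} (hc : 0 < c)
    (hg : ∀ s ∈ T, ∀ t ∈ T, c * |s - t| ≤ |g s - g t|) :
    volume (g ⁻¹' O ∩ T) ≤ ENNReal.ofReal c⁻¹ * volume O := by
  have hinj : InjOn g T := fun s hs t ht h => by
    have := hg s hs t ht
    rw [h, sub_self, abs_zero] at this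
    have := le_antisymm (nonpos_of_mul_nonpos_right this hc) (abs_nonneg _)
    exact sub_eq_zero.1 (abs_eq_zero.1 this)
  have hL : LipschitzOnWith (Real.toNNReal c⁻¹) (Function.invFunOn g T) (O ∩ g '' T) := by
    refine LipschitzOnWith.of_dist_le_mul ?_
    rintro _ ⟨-, s, hs, rfl⟩ _ ⟨-, t, ht, rfl⟩
    rw [hinj.leftInvOn_invFunOn hs, hinj.leftInvOn_invFunOn ht, Real.dist_eq, Real.dist_eq,
      Real.coe_toNNReal _ (inv_pos.2 hc).le, inv_mul_eq_div, le_div_iff₀ hc, mul_comm]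
    exact hg s hs t ht
  have hsub : g ⁻¹' O ∩ T ⊆ Function.invFunOn g T '' (O ∩ g '' T) := fun t ht =>
    ⟨g t, ⟨ht.1, mem_image_of_mem _ ht.2⟩, hinj.leftInvOn_invFunOn ht.2⟩
  have := hL.hausdorffMeasure_image_le (d := 1) zero_le_one
  rw [hausdorffMeasure_real, ENNReal.rpow_one] at this
  exact (measure_mono hsub).trans <| this.trans <| by
    gcongr
    · rfl
    · exact inter_subset_left

/-- A function whose derivative stays away from `0`, with constant sign, is expanding, by the mean
value theorem. -/
lemma expand_of_deriv {g g' : ℝ → ℝ} {T : Set ℝ} (hT : T.OrdConnected)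
    (hd : ∀ t ∈ T, HasDerivWithinAt g (g' t) T t) {c : ℝ}
    (h : (∀ t ∈ T, c ≤ g' t) ∨ ∀ t ∈ T, g' t ≤ -c) :
    ∀ s ∈ T, ∀ t ∈ T, c * |s - t| ≤ |g s - g t| := by
  suffices H : ∀ s ∈ T, ∀ t ∈ T, s < t → c * |s - t| ≤ |g s - g t| by
    intro s hs t ht
    rcases lt_trichotomy s t with h | rfl | h
    · exact H s hs t ht h
    · simp
    · rw [abs_sub_comm, abs_sub_comm (g s)]; exact H t ht s hs h
  intro s hs t ht hst
  have hI : Icc s t ⊆ T := hT.out hs ht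
  obtain ⟨x, hx, hgx⟩ := exists_hasDerivAt_eq_slope g g' hst
    (fun x hx => ((hd x (hI hx)).mono hI).continuousWithinAt)
    (fun x hx => ((hd x (hI (Ioo_subset_Icc_self hx))).mono hI).hasDerivAt (Icc_mem_nhds hx.1 hx.2))
  have hxT := hI (Ioo_subset_Icc_self hx)
  rw [eq_div_iff (sub_pos.2 hst).ne'] at hgx
  rw [abs_sub_comm, abs_of_pos (sub_pos.2 hst), abs_sub_comm, ← hgx, abs_mul,
    abs_of_pos (sub_pos.2 hst)]
  refine mul_le_mul_of_nonneg_right ?_ (sub_pos.2 hst).le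
  rcases h with h | h
  · exact (h x hxT).trans (le_abs_self _)
  · exact (le_neg.1 (h x hxT)).trans (neg_le_abs _)

lemma hasDerivWithinAt_lf {γ : ℝ → E2} {v : E2} {T : Set ℝ} {t : ℝ} (n : ℝ × ℝ)
    (h : HasDerivWithinAt γ v T t) : HasDerivWithinAt (fun t => lf n (γ t)) (lf n v) T t := by
  have h' : ∀ i, HasDerivWithinAt (fun t => γ t i) (v i) T t := fun i =>
    (EuclideanSpace.proj (𝕜 := ℝ) i).hasFDerivAt.comp_hasDerivWithinAt t h
  exact ((h' 0).const_mul _).add ((h' 1).const_mul _)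

/-- At each point of a curve, some `lf u` with `n j = u` for infinitely many `j` does not vanish on
the tangent, so that it is expanding along the curve nearby. The parameters of the points sent into
`O j` by it thus form a set of measure at most a constant times the measure of `O j`, which is
arbitrarily small. -/
lemma purelyUnrectifiable_pSet {O : ℕ → Set ℝ} (hO : ∀ j, IsOpen (O j))
    (hv : ∀ j, volume (O j) ≤ ENNReal.ofReal ((1 / 2) ^ j)) {n : ℕ → ℝ × ℝ}
    (hn : ∀ x : E2, x ≠ 0 → ∃ u, lf u x ≠ 0 ∧ ∃ᶠ j in atTop, n j = u) :
    PurelyUnrectifiable (pSet O n) := by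
  refine ⟨measurableSet_pSet hO n, ?_⟩
  rintro a b γ γ' ⟨-, hc, hd, h1⟩
  refine measure_null_of_locally_null _ fun t₀ ht₀ => ?_
  have ht := ht₀.2
  have hne : γ' t₀ ≠ 0 := fun h => by have := h1 t₀ ht; simp [h] at this
  obtain ⟨u, hu, hj⟩ := hn _ hne
  set c := |lf u (γ' t₀)| / 2 with hcdef
  have hc0 : 0 < c := half_pos (abs_pos.2 hu)
  have hcont : ContinuousWithinAt (fun t => lf u (γ' t)) (Icc a b) t₀ :=
    (continuous_lf u).continuousAt.comp_continuousWithinAt (hc t₀ ht)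
  obtain ⟨δ, hδ, hδc⟩ := Metric.continuousWithinAt_iff.1 hcont c hc0
  set T := Icc a b ∩ ball t₀ δ with hT
  have hTo : T.OrdConnected := by
    rw [hT, Real.ball_eq_Ioo]; infer_instance
  have hexp := expand_of_deriv (g := fun t => lf u (γ t)) (g' := fun t => lf u (γ' t)) hTo
    (fun t ht => hasDerivWithinAt_lf u ((hd t ht.1).mono inter_subset_left)) (c := c) <| by
      rcases le_or_gt 0 (lf u (γ' t₀)) with h | h
      · left; intro t ht
        have := hδc ht.1 ht.2
        rw [Real.dist_eq, abs_lt] at this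
        rw [hcdef, abs_of_nonneg h] at *; linarith
      · right; intro t ht
        have := hδc ht.1 ht.2
        rw [Real.dist_eq, abs_lt] at this
        rw [hcdef, abs_of_neg h] at *; linarith
  refine ⟨γ ⁻¹' pSet O n ∩ T, ?_, ?_⟩
  · refine mem_nhdsWithin.2 ⟨ball t₀ δ, isOpen_ball, mem_ball_self hδ, ?_⟩
    rintro t ⟨h1, h2, h3⟩
    exact ⟨h2, h3, h1⟩
  · refine le_antisymm (le_of_forall_gt fun η hη => ?_) zero_le
    have hlim : Tendsto (fun j : ℕ => ENNReal.ofReal c⁻¹ * ENNReal.ofReal ((1 / 2) ^ j)) atTop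
        (𝓝 0) := by
      have := (tendsto_pow_atTop_nhds_zero_of_lt_one (r := (1 / 2 : ℝ)) (by norm_num)
        (by norm_num)).const_mul c⁻¹
      rw [mul_zero] at this
      have := ENNReal.tendsto_ofReal this
      simpa [ENNReal.ofReal_mul (inv_pos.2 hc0).le] using this
    obtain ⟨j, hj, hlt⟩ := (hj.and_eventually (hlim.eventually_lt_const hη)).exists
    refine lt_of_le_of_lt ?_ hlt
    refine (measure_mono ?_).trans ((volume_preimage_le (O := O j) hc0 hexp).trans
      (mul_le_mul_right (hv j) _))
    rintro t ⟨h2, h3⟩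
    exact ⟨by simpa [hj] using mem_iInter.1 h2.2 j, h3⟩

/-- There are dense open sets of arbitrarily small measure. -/
lemma exists_small_open_dense (j : ℕ) : ∃ O : Set ℝ, IsOpen O ∧ Dense O ∧
    volume O ≤ ENNReal.ofReal ((1 / 2) ^ j) := by
  obtain ⟨U, hU, hUo, hv⟩ := (range ((↑) : ℚ → ℝ)).exists_isOpen_lt_of_lt (μ := volume)
    (ENNReal.ofReal ((1 / 2) ^ j)) <| by
      rw [(countable_range _).measure_zero]; exact ENNReal.ofReal_pos.2 (by positivity)
  exact ⟨U, hUo, Rat.denseRange_cast.mono hU, hv.le⟩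

/-- The normals of the two families: the coordinate directions (`fam = true`) and the diagonal ones
(`fam = false`), each one being taken for all `j` of a given parity. -/
def nrm (fam : Bool) (j : ℕ) : ℝ × ℝ :=
  bif fam then (if Even j then (1, 0) else (0, 1)) else (if Even j then (1, 1) else (1, -1))

/-- Within each family, the two normals are linearly independent and recur infinitely often. -/
lemma frequently_nrm (fam : Bool) (x : E2) (hx : x ≠ 0) :
    ∃ u, lf u x ≠ 0 ∧ ∃ᶠ j in atTop, nrm fam j = u := by
  have h0 : ∃ᶠ j in atTop, nrm fam j = nrm fam 0 :=
    Nat.frequently_even.mono fun j hj => by simp [nrm, hj]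
  have h1 : ∃ᶠ j in atTop, nrm fam j = nrm fam 1 :=
    Nat.frequently_odd.mono fun j hj => by simp [nrm, Nat.not_even_iff_odd.2 hj]
  by_contra h
  refine hx ?_
  have e0 : lf (nrm fam 0) x = 0 := by_contra fun e => h ⟨_, e, h0⟩
  have e1 : lf (nrm fam 1) x = 0 := by_contra fun e => h ⟨_, e, h1⟩
  have : x 0 = 0 ∧ x 1 = 0 := by
    cases fam <;> simp [lf, nrm] at e0 e1 <;> constructor <;> linarith
  ext i; fin_cases i
  · exact this.1
  · exact this.2

/-! ### Points of differentiability in all directions -/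

lemma PurelyUnrectifiable.union {P Q : Set E2} (hP : PurelyUnrectifiable P)
    (hQ : PurelyUnrectifiable Q) : PurelyUnrectifiable (P ∪ Q) := by
  refine ⟨hP.1.union hQ.1, fun a b γ γ' h => ?_⟩
  rw [preimage_union, union_inter_distrib_right]
  exact measure_union_null (hP.2 a b γ γ' h) (hQ.2 a b γ γ' h)

lemma exists_dense_pair : ∃ S : Bool → Set ℝ, (∀ b, (S b).Countable) ∧ (∀ b, Dense (S b)) ∧
    Disjoint (S false) (S true) := by
  refine ⟨fun b => bif b then range (fun q : ℚ => √2 + (q : ℝ)) else range ((↑) : ℚ → ℝ),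
    ?_, ?_, ?_⟩
  · rintro (_ | _) <;> exact countable_range _
  · rintro (_ | _)
    · exact Rat.denseRange_cast
    · exact (Homeomorph.addLeft √2).surjective.denseRange.comp Rat.denseRange_cast
        (Homeomorph.addLeft √2).continuous
  · rw [Set.disjoint_left]
    rintro _ ⟨q, rfl⟩ ⟨q', h⟩
    exact irrational_sqrt_two.ne_rat (q - q') (by push_cast; simp at h; linarith)

/-- Every unit vector has a dominant coordinate, so that the projection in its direction is
proportional to some `lam m` with `|m| ≤ 1`. -/
lemma exists_inner_pt (e : E2) (he : ‖e‖ = 1) : ∃ (o : Bool) (v m : ℝ), v ≠ 0 ∧ |m| ≤ 1 ∧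
    ∀ p, ⟪pt o p, e⟫ = v * lam m p := by
  have hne : ¬ (e 0 = 0 ∧ e 1 = 0) := fun h => by
    have : e = 0 := by
      ext i; fin_cases i
      · exact h.1
      · exact h.2
    simp [this] at he
  rcases le_total |e 1| |e 0| with h | h
  · have h0 : e 0 ≠ 0 := fun h0 => hne ⟨h0, by simpa [h0] using h⟩
    refine ⟨false, e 0, e 1 / e 0, h0, by rw [abs_div]; exact div_le_one_of_le₀ h (abs_nonneg _),
      fun p => ?_⟩
    simp [pt, lam, PiLp.inner_apply, Fin.sum_univ_two]
    field_simp
  · have h0 : e 1 ≠ 0 := fun h0 => hne ⟨by simpa [h0] using h, h0⟩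
    refine ⟨true, e 1, e 0 / e 1, h0, by rw [abs_div]; exact div_le_one_of_le₀ h (abs_nonneg _),
      fun p => ?_⟩
    simp [pt, lam, PiLp.inner_apply, Fin.sum_univ_two]
    field_simp
    ring

/-- For every `m` with `|m| ≤ 1`, the fibres of `lam m` are uniformly transversal to all the level
lines of one of the two families of forms. -/
lemma exists_family_fibreDense {m : ℝ} (hm : |m| ≤ 1) : ∃ fam, ∀ (o : Bool) (j : ℕ) (O : Set ℝ)
    (wf : ℝ → ℝ), (∀ m α β, |m| ≤ 1 → |α| ≤ 1 → |β| ≤ 1 → 1 / 2 ≤ |β - α * m| →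
      FibreDense m {x | α * x.1 + β * x.2 ∈ O} wf) →
    FibreDense m (pt o ⁻¹' (lf (nrm fam j) ⁻¹' O)) wf := by
  -- the axes are used when the fibre is not nearly vertical, the diagonals otherwise; the second
  -- bound takes care of swapped coordinates
  have key : ∃ fam, ∀ j, |(nrm fam j).1| ≤ 1 ∧ |(nrm fam j).2| ≤ 1 ∧
      1 / 2 ≤ |(nrm fam j).2 - (nrm fam j).1 * m| ∧ 1 / 2 ≤ |(nrm fam j).1 - (nrm fam j).2 * m| := by
    rcases le_or_gt (1 / 2) |m| with h | h
    · refine ⟨true, fun j => ?_⟩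
      by_cases hj : Even j <;> simp [nrm, hj] <;> norm_num at h ⊢ <;> linarith
    · refine ⟨false, fun j => ?_⟩
      rw [abs_lt] at h
      by_cases hj : Even j <;> simp [nrm, hj, le_abs]
      · left; linarith
      · constructor
        · right; linarith
        · left; linarith
  obtain ⟨fam, h⟩ := key
  refine ⟨fam, fun o j O wf hO => ?_⟩
  obtain ⟨h1, h2, h3, h4⟩ := h j
  cases o
  · exact hO m _ _ hm h1 h2 h3
  · convert hO m _ _ hm h2 h1 h4 using 1
    ext x
    simp [lf, pt, add_comm]

/-- A function that attains the slope `± 1` in a coordinate direction at an interior point of the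
square is differentiable there. -/
lemma mem_Diff {f : Lip1} {o : Bool} {p : ℝ × ℝ} (hp : p ∈ oSq) {c : ℝ} (hc : |c| = 1)
    (h : HasDerivAt (fun t => extF f (pt o (t, p.2))) c p.1) : pt o p ∈ Diff f.1 := by
  have hp' : pt o p ∈ unitSquare :=
    pt_mem.2 ⟨Ioo_subset_Icc_self hp.1, Ioo_subset_Icc_self hp.2⟩
  have hd : DifferentiableAt ℝ (extF f) (pt o p) := by
    refine differentiableAt_of_abs_slope_one (lipschitz_extF f) (v := pt o (1, 0))
      (by simp [norm_pt_fst]) hc ?_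
    have h0 : HasDerivAt (fun t : ℝ => p.1 + t) 1 0 := (hasDerivAt_id 0).const_add p.1
    have := HasDerivAt.comp (0 : ℝ) (h₂ := fun t => extF f (pt o (t, p.2))) (by simpa using h) h0
    rw [mul_one] at this
    refine this.congr_of_eventuallyEq (Eventually.of_forall fun t => ?_)
    have : pt o p + t • pt o (1, 0) = pt o (p.1 + t, p.2) := by
      ext i; fin_cases i <;> cases o <;> simp [pt]
    simp [this]
  exact ⟨hp', hd.differentiableWithinAt.congr (fun x hx => by simp [ext2, hx, extF_eq f hx])
    (by simp [ext2, hp', extF_eq f hp'])⟩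

open scoped Pointwise in
/-- The deterministic part of the construction: the two typical properties of `f` provide, for
each direction `e`, a continuum of disjoint compact sets of points of differentiability whose
projections have positive measure. -/
lemma exists_compact_family {O : ℕ → Set ℝ} (hO : ∀ j, IsOpen (O j)) {wf : ℕ → ℝ → ℝ}
    (hwf : ∀ j m α β, |m| ≤ 1 → |α| ≤ 1 → |β| ≤ 1 → 1 / 2 ≤ |β - α * m| →
      FibreDense m {x | α * x.1 + β * x.2 ∈ O j} (wf j))
    {S : Bool → Set ℝ} (hS : ∀ b, Dense (S b)) (hSd : Disjoint (S false) (S true)) {f : Lip1}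
    (hA : ∀ o b, ∀ s ∈ S b ∩ Icc 0 1, ∀ᵐ t, t ∈ Ioo (0 : ℝ) 1 →
      |deriv (fun t => extF f (pt o (t, s))) t| = 1)
    (hC : ∀ o j, ∀ R > 0, ∃ r, 0 < r ∧ r < R ∧
      StraightAt (fun p => 1 * extF f (pt o p)) (kapS j) (tau (wf j) (epsS j) r) r)
    (hC' : ∀ o j, ∀ R > 0, ∃ r, 0 < r ∧ r < R ∧
      StraightAt (fun p => -1 * extF f (pt o p)) (kapS j) (tau (wf j) (epsS j) r) r)
    {e : E2} (he : ‖e‖ = 1) :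
    ∃ K : (ℕ → Bool) → Set E2, Pairwise (fun ω ω' => Disjoint (K ω) (K ω')) ∧ ∀ ω,
      IsCompact (K ω) ∧ K ω ⊆ Diff f.1 ∩ (pSet O (nrm false) ∪ pSet O (nrm true)) ∧
      0 < volume ((fun x => ⟪x, e⟫) '' K ω) := by
  obtain ⟨o, v, m, hv, hm, hin⟩ := exists_inner_pt e he
  obtain ⟨fam, hfam⟩ := exists_family_fibreDense hm
  obtain ⟨K, hK, hKω⟩ := exists_family_of_typical (Φ := fun p => extF f (pt o p))
    (L1Lip_comp_pt (lipschitz_extF f) o) hm hS hSd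
    (fun b s hs => hA o b s ⟨hs.1, Ioo_subset_Icc_self hs.2⟩)
    (W := fun j => pt o ⁻¹' (lf (nrm fam j) ⁻¹' O j)) (wf := wf)
    (fun j => ((hO j).preimage (continuous_lf _)).preimage (continuous_pt o))
    (fun j => hfam o j _ _ (hwf j))
    (fun j => by simpa using hC o j) (fun j => by
      have := hC' o j
      simp only [neg_one_mul] at this
      exact this)
  have hinj : Function.Injective (pt o) := fun p q h => by
    have h0 := congrArg (fun x : E2 => x 0) h
    have h1 := congrArg (fun x : E2 => x 1) h
    cases o <;> simp [pt] at h0 h1 <;> ext <;> assumption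
  refine ⟨fun ω => pt o '' K ω, fun ω ω' h => (disjoint_image_iff hinj).2 (hK h), fun ω => ?_⟩
  obtain ⟨hc, hsq, hW, hpos, c, hc1, hd⟩ := hKω ω
  refine ⟨hc.image (continuous_pt o), ?_, ?_⟩
  · rintro _ ⟨p, hp, rfl⟩
    have hD := mem_Diff (hsq hp) hc1 (hd p hp)
    have : pt o p ∈ pSet O (nrm fam) := ⟨hD.1, mem_iInter.2 fun j => hW j hp⟩
    exact ⟨hD, by cases fam <;> [exact Or.inl this; exact Or.inr this]⟩
  · have : (fun x => ⟪x, e⟫) '' (pt o '' K ω) = v • (lam m '' K ω) := by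
      rw [image_image, ← image_smul, image_image]
      simp only [hin, smul_eq_mul]
    rw [this, Measure.addHaar_smul]
    exact ENNReal.mul_pos (by simpa using hv) hpos.ne'

/-- A set containing a continuum of disjoint compact sets with projections of positive measure
does not have `σ`-finite length. -/
lemma not_sigmaFinite_of_family {A : Set E2} {e : E2} (he : ‖e‖ = 1)
    {K : (ℕ → Bool) → Set E2} (hK : Pairwise (fun ω ω' => Disjoint (K ω) (K ω')))
    (h : ∀ ω, IsCompact (K ω) ∧ K ω ⊆ A ∧ 0 < volume ((fun x => ⟪x, e⟫) '' K ω)) :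
    ¬ SigmaFinite ((μH[1] : Measure E2).restrict A) := by
  intro hσ
  have hcount := Measure.countable_meas_pos_of_disjoint_iUnion
    (μ := (μH[1] : Measure E2).restrict A) (fun ω => (h ω).1.measurableSet) hK
  have hall : {ω | 0 < (μH[1] : Measure E2).restrict A (K ω)} = univ := by
    refine eq_univ_of_forall fun ω => ?_
    rw [Set.mem_ofPred_eq, Measure.restrict_apply (h ω).1.measurableSet,
      inter_eq_self_of_subset_left (h ω).2.1]
    have hL : LipschitzWith 1 fun x : E2 => ⟪x, e⟫ := by
      refine LipschitzWith.of_dist_le_mul fun x y => ?_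
      rw [Real.dist_eq, ← inner_sub_left, dist_eq_norm, NNReal.coe_one, one_mul]
      simpa [he] using abs_real_inner_le_norm (x - y) e
    have := hL.hausdorffMeasure_image_le (d := 1) zero_le_one (K ω)
    rw [hausdorffMeasure_real, ENNReal.coe_one, ENNReal.one_rpow, one_mul] at this
    exact (h ω).2.2.trans_le this
  rw [hall, countable_univ_iff] at hcount
  obtain ⟨g, hg⟩ := hcount.exists_injective_nat
  classical
  refine Function.cantor_injective (fun s : Set ℕ => g fun n => decide (n ∈ s)) fun s t hst => ?_
  ext n
  simpa using congrFun (hg hst) n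

/-- There exists a purely unrectifiable set `P ⊆ [0,1]²` such that the
typical `f ∈ Lip₁([0,1]²)` has points of differentiability in `P`, and moreover
`Diff(f) ∩ P` (a) has non-σ-finite one-dimensional Hausdorff measure and (b) projects in
every direction to a set of positive Lebesgue measure. -/
theorem stmt0 :
    ∃ P : Set E2, PurelyUnrectifiable P ∧ P ⊆ unitSquare ∧
      {f : Lip1 | (Diff (⇑f.1) ∩ P).Nonempty ∧
        ¬ SigmaFinite ((μH[1] : Measure E2).restrict (Diff (⇑f.1) ∩ P)) ∧
        (∀ e ∈ sphere (0:E2) 1,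
          0 < volume ((fun x => ⟪x, e⟫) '' (Diff (⇑f.1) ∩ P)))}
      ∈ residual Lip1 := by
  choose O hO hOd hOv using exists_small_open_dense
  choose wf hwf using fun j => exists_fibreDense (hO j) (hOd j)
  obtain ⟨S, hSc, hS, hSd⟩ := exists_dense_pair
  have hτ : ∀ j, ∀ r > 0, 0 < tau (wf j) (epsS j) r := fun j r hr => by
    have hb : 0 < epsS j * r / 64 := div_pos (mul_pos (epsS_pos j) hr) (by norm_num)
    have hw := (hwf j 0 0 1 (by simp) (by simp) (by simp) (by norm_num) _ hb).1
    exact div_pos (lt_min hw hb) (by norm_num)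
  refine ⟨pSet O (nrm false) ∪ pSet O (nrm true),
    (purelyUnrectifiable_pSet hO hOv (frequently_nrm _)).union
      (purelyUnrectifiable_pSet hO hOv (frequently_nrm _)),
    union_subset inter_subset_left inter_subset_left, ?_⟩
  have hA : ∀ᶠ f : Lip1 in residual Lip1, ∀ o b, ∀ s ∈ S b ∩ Icc 0 1,
      ∀ᵐ t, t ∈ Ioo (0 : ℝ) 1 → |deriv (fun t => extF f (pt o (t, s))) t| = 1 := by
    refine eventually_countable_forall.2 fun o => eventually_countable_forall.2 fun b => ?_
    exact (eventually_countable_ball ((hSc b).mono inter_subset_left)).2 fun s hs =>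
      typical_deriv o hs.2
  have hC : ∀ c : ℝ, |c| = 1 → ∀ᶠ f : Lip1 in residual Lip1, ∀ o j, ∀ R > 0, ∃ r, 0 < r ∧ r < R ∧
      StraightAt (fun p => c * extF f (pt o p)) (kapS j) (tau (wf j) (epsS j) r) r :=
    fun c hc => eventually_countable_forall.2 fun o => eventually_countable_forall.2 fun j =>
      typical_straight o hc (kapS_pos j) (hτ j)
  filter_upwards [hA, hC 1 (by simp), hC (-1) (by simp)] with f h1 h2 h3
  have main := fun (e : E2) (he : ‖e‖ = 1) => exists_compact_family hO hwf hS hSd h1 h2 h3 he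
  obtain ⟨K, hK, hKω⟩ := main (pt false (1, 0)) (by simp [norm_pt_fst])
  refine ⟨?_, not_sigmaFinite_of_family (by simp [norm_pt_fst]) hK hKω, fun e he => ?_⟩
  · obtain ⟨-, hsub, hpos⟩ := hKω fun _ => true
    exact (nonempty_of_measure_ne_zero hpos.ne').of_image.mono hsub
  · obtain ⟨K, -, hKω⟩ := main e (by simpa using he)
    obtain ⟨-, hsub, hpos⟩ := hKω fun _ => true
    exact hpos.trans_le (measure_mono (image_mono hsub))

end
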